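/- arXiv:2102.03838 — 4 statements merged into one kernel-verified Lean document; each statement's English description precedes it below -/
import Mathlib

section
/- If X is a Grothendieck Banach space and Y is a Banach space whose dual unit ball is weak*-sequentially compact, then every bounded linear operator T : X → Y is weakly compact. -/
open Filter Topology ZeroAtInfty

/-- A sequence in the dual of `X` converges in the weak* topology. -/
def WeakStarConv (X : Type*) [SeminormedAddCommGroup X] [NormedSpace ℝ X]
    (f : ℕ → X →L[ℝ] ℝ) (g : X →L[ℝ] ℝ) : Prop :=
  ∀ x : X, Tendsto (fun n => f n x) atTop (𝓝 (g x))

/-- A sequence in a normed space `Z` converges in the weak topology. -/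
def WeakConv (Z : Type*) [SeminormedAddCommGroup Z] [NormedSpace ℝ Z]
    (f : ℕ → Z) (g : Z) : Prop :=
  ∀ φ : Z →L[ℝ] ℝ, Tendsto (fun n => φ (f n)) atTop (𝓝 (φ g))

/-- A Banach space is Grothendieck if weak*-convergent sequences in its dual converge weakly. -/
def IsGrothendieck (X : Type*) [SeminormedAddCommGroup X] [NormedSpace ℝ X] : Prop :=
  ∀ (f : ℕ → X →L[ℝ] ℝ) (g : X →L[ℝ] ℝ),
    WeakStarConv X f g → WeakConv (X →L[ℝ] ℝ) f g

/-- The weak topology of a normed space. -/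
def weakTopology (Y : Type*) [SeminormedAddCommGroup Y] [NormedSpace ℝ Y] :
    TopologicalSpace Y :=
  TopologicalSpace.induced (fun (y : Y) => fun f : Y →L[ℝ] ℝ => f y) Pi.topologicalSpace

/-- An operator is weakly compact if the image of the closed unit ball is
relatively compact in the weak topology. -/
def IsWeaklyCompactOp {X Y : Type*} [SeminormedAddCommGroup X] [NormedSpace ℝ X]
    [SeminormedAddCommGroup Y] [NormedSpace ℝ Y] (T : X →L[ℝ] Y) : Prop :=
  @IsCompact Y (weakTopology Y) (@closure Y (weakTopology Y) (⇑T '' Metric.closedBall 0 1))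

/-! If `T` is not weakly compact, some `Λ ∈ Y**` outside `Y` lies in the weak* closure of the image
of the unit ball. Alternately choose functionals `fₙ` in the dual ball that annihilate the earlier
vectors but stay large on `Λ`, and vectors `T xₙ` that imitate `Λ` on the functionals chosen so far:
then `fₙ (T xₘ) = 0` and `|fₘ (T xₙ)| > δ` for `m < n`. By the hypotheses on `X` and `Y`, a
subsequence of `fₙ ∘ T` converges weakly in `X*` to some `h`. The zeros force `h xₘ = 0` for all
`m`, so a weak* cluster point `ξ ∈ X**` of `xₙ` vanishes at `h`, contradicting `|ξ (fₘ ∘ T)| ≥ δ`.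
-/

open NormedSpace

/-- A triangular system: the array `f n (x m)` vanishes on one side of the diagonal and is larger
than `δ` in norm on the other; the diagonal is unrestricted. For `δ > 0` such a system violates
Grothendieck's double limit criterion. -/
structure IsTriangularSystem {𝕜 E : Type*} [NontriviallyNormedField 𝕜] [SeminormedAddCommGroup E]
    [NormedSpace 𝕜 E] (δ : ℝ) (f : ℕ → StrongDual 𝕜 E) (x : ℕ → E) : Prop where
  apply_eq_zero : ∀ ⦃m n⦄, m < n → f n (x m) = 0
  lt_norm_apply : ∀ ⦃m n⦄, m < n → δ < ‖f m (x n)‖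

section NontriviallyNormedField

variable {𝕜 E F : Type*} [NontriviallyNormedField 𝕜] [SeminormedAddCommGroup E] [NormedSpace 𝕜 E]
  [SeminormedAddCommGroup F] [NormedSpace 𝕜 F] {δ : ℝ}

theorem exists_bidual_tendsto_of_norm_le [ProperSpace 𝕜] {ι : Type*} (l : Ultrafilter ι)
    {x : ι → E} {r : ℝ} (hx : ∀ i, ‖x i‖ ≤ r) :
    ∃ ξ : StrongDual 𝕜 (StrongDual 𝕜 E), ∀ f : StrongDual 𝕜 E,
      Tendsto (fun i => f (x i)) l (𝓝 (ξ f)) := by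
  let u : ι → WeakDual 𝕜 (StrongDual 𝕜 E) :=
    fun i => StrongDual.toWeakDual (inclusionInDoubleDual 𝕜 E (x i))
  have u_mem (i : ι) : u i ∈ WeakDual.toStrongDual ⁻¹' Metric.closedBall 0 r :=
    (mem_closedBall_zero_iff (E := StrongDual 𝕜 (StrongDual 𝕜 E))).2
      ((double_dual_bound 𝕜 E (x i)).trans (hx i))
  obtain ⟨ξ, -, hξ⟩ := (WeakDual.isCompact_closedBall 0 r).ultrafilter_le_nhds (l.map u)
    (tendsto_principal.2 (Eventually.of_forall u_mem))
  exact ⟨WeakDual.toStrongDual ξ, fun f => ((WeakDual.eval_continuous f).tendsto ξ).comp hξ⟩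

theorem exists_mem_forall_lt_norm_apply_of_mem_closure {S : Set (WeakSpace 𝕜 E)}
    {Λ : WeakDual 𝕜 (StrongDual 𝕜 E)} (hΛ : Λ ∈ closure (inclusionInDoubleDualWeak 𝕜 E '' S))
    (A : Finset (StrongDual 𝕜 E)) (hA : ∀ f ∈ A, δ < ‖Λ f‖) :
    ∃ y ∈ S, ∀ f ∈ A, δ < ‖f ((toWeakSpace 𝕜 E).symm y)‖ := by
  have isOpen_large : IsOpen (⋂ f ∈ A, {Γ : WeakDual 𝕜 (StrongDual 𝕜 E) | δ < ‖Γ f‖}) :=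
    isOpen_biInter_finset fun f _ => isOpen_lt continuous_const (WeakDual.eval_continuous f).norm
  obtain ⟨_, hΓ, y, hy, rfl⟩ := mem_closure_iff.1 hΛ _ isOpen_large (Set.mem_iInter₂.2 hA)
  exact ⟨y, hy, Set.mem_iInter₂.1 hΓ⟩

namespace IsTriangularSystem

theorem comp_strictMono {f : ℕ → StrongDual 𝕜 E} {x : ℕ → E} (h : IsTriangularSystem δ f x)
    {φ : ℕ → ℕ} (hφ : StrictMono φ) : IsTriangularSystem δ (f ∘ φ) (x ∘ φ) where
  apply_eq_zero _ _ hmn := h.apply_eq_zero (hφ hmn)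
  lt_norm_apply _ _ hmn := h.lt_norm_apply (hφ hmn)

theorem comp_clm (T : E →L[𝕜] F) {f : ℕ → StrongDual 𝕜 F} {x : ℕ → E}
    (h : IsTriangularSystem δ f (T ∘ x)) : IsTriangularSystem δ (fun n => (f n).comp T) x where
  apply_eq_zero := h.apply_eq_zero
  lt_norm_apply := h.lt_norm_apply

theorem not_forall_bidual_tendsto [ProperSpace 𝕜] {f : ℕ → StrongDual 𝕜 E} {x : ℕ → E}
    (h : IsTriangularSystem δ f x) (hδ : 0 < δ) {r : ℝ} (hx : ∀ n, ‖x n‖ ≤ r)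
    (g : StrongDual 𝕜 E) :
    ¬ ∀ ξ : StrongDual 𝕜 (StrongDual 𝕜 E), Tendsto (fun n => ξ (f n)) atTop (𝓝 (ξ g)) := by
  intro hfg
  obtain ⟨ξ, hξ⟩ := exists_bidual_tendsto_of_norm_le (𝕜 := 𝕜) (hyperfilter ℕ) hx
  have g_apply (m : ℕ) : g (x m) = 0 := by
    refine tendsto_nhds_unique (hfg (inclusionInDoubleDual 𝕜 E (x m)))
      (tendsto_const_nhds.congr' ?_)
    filter_upwards [eventually_gt_atTop m] with n hmn using (h.apply_eq_zero hmn).symm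
  have ξ_g : ξ g = 0 := tendsto_nhds_unique (hξ g) (by simp only [g_apply, tendsto_const_nhds])
  have le_norm_ξ (m : ℕ) : δ ≤ ‖ξ (f m)‖ := by
    refine ge_of_tendsto (hξ (f m)).norm ?_
    filter_upwards [Nat.hyperfilter_le_atTop (eventually_gt_atTop m)] with n hmn
    exact (h.lt_norm_apply hmn).le
  have le_norm_ξ_g : δ ≤ ‖ξ g‖ := ge_of_tendsto' (hfg ξ).norm le_norm_ξ
  rw [ξ_g, norm_zero] at le_norm_ξ_g
  exact hδ.not_ge le_norm_ξ_g

end IsTriangularSystem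

end NontriviallyNormedField

section RCLike

variable {𝕜 E : Type*} [RCLike 𝕜] [SeminormedAddCommGroup E] [NormedSpace 𝕜 E]

theorem exists_mem_span_norm_sub_inclusionInDoubleDual_le
    (Λ : StrongDual 𝕜 (StrongDual 𝕜 E)) {c : ℝ} {s : Set E} (hs : s.Finite)
    (h : ∀ f : StrongDual 𝕜 E, ‖f‖ ≤ 1 → (∀ y ∈ s, f y = 0) → ‖Λ f‖ ≤ c) :
    ∃ y ∈ Submodule.span 𝕜 s, ‖Λ - inclusionInDoubleDual 𝕜 E y‖ ≤ c := by
  have := hs.to_subtype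
  have hc : 0 ≤ c := by simpa using h 0 (by simp) (by simp)
  let J : E →ₗ[𝕜] StrongDual 𝕜 E →ₗ[𝕜] 𝕜 :=
    ContinuousLinearMap.coeLM 𝕜 ∘ₗ (inclusionInDoubleDual 𝕜 E).toLinearMap
  let p : Submodule 𝕜 (StrongDual 𝕜 E) := ⨅ y : s, LinearMap.ker (J y)
  have mem_p (f : StrongDual 𝕜 E) : f ∈ p ↔ ∀ y ∈ s, f y = 0 := by simp [p, J]
  obtain ⟨Γ, hΓ, hΓ_norm⟩ := exists_extension_norm_eq p (Λ.comp p.subtypeL)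
  have hΓc : ‖Γ‖ ≤ c := by
    rw [hΓ_norm]
    exact ContinuousLinearMap.opNorm_le_of_unit_norm hc fun f hf => h f hf.le ((mem_p f).1 f.2)
  have sub_mem : (Λ - Γ).toLinearMap ∈ Submodule.span 𝕜 (Set.range fun y : s => J y) :=
    mem_span_of_iInf_ker_le_ker fun f hf => by simpa [sub_eq_zero] using (hΓ ⟨f, hf⟩).symm
  rw [← Set.image_eq_range, ← Submodule.map_span] at sub_mem
  obtain ⟨y, hy, hyΛ⟩ := sub_mem
  have sub_eq : Λ - inclusionInDoubleDual 𝕜 E y = Γ := by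
    ext f
    have apply_y : f y = Λ f - Γ f := LinearMap.congr_fun hyΛ f
    simp [apply_y]
  exact ⟨y, hy, sub_eq ▸ hΓc⟩

theorem isClosed_range_inclusionInDoubleDual [CompleteSpace E] :
    IsClosed (Set.range (inclusionInDoubleDual 𝕜 E)) :=
  (inclusionInDoubleDualLi (E := E) 𝕜).isometry.isUniformInducing.isComplete_range.isClosed

theorem exists_pos_forall_finite_exists_lt_norm_apply [CompleteSpace E]
    {Λ : StrongDual 𝕜 (StrongDual 𝕜 E)}
    (hΛ : Λ ∉ Set.range (inclusionInDoubleDual 𝕜 E)) :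
    ∃ δ > 0, ∀ s : Set E, s.Finite →
      ∃ f : StrongDual 𝕜 E, ‖f‖ ≤ 1 ∧ (∀ y ∈ s, f y = 0) ∧ δ < ‖Λ f‖ := by
  obtain ⟨ε, hε, hball⟩ :=
    Metric.isOpen_iff.1 isClosed_range_inclusionInDoubleDual.isOpen_compl Λ hΛ
  refine ⟨ε / 2, half_pos hε, fun s hs => ?_⟩
  by_contra! hsmall
  obtain ⟨y, -, hy⟩ := exists_mem_span_norm_sub_inclusionInDoubleDual_le Λ hs hsmall
  have mem_ball : inclusionInDoubleDual 𝕜 E y ∈ Metric.ball Λ ε :=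
    (mem_ball_iff_norm' (E := StrongDual 𝕜 (StrongDual 𝕜 E))).2 (hy.trans_lt (half_lt_self hε))
  exact hball mem_ball (Set.mem_range_self y)

theorem exists_isTriangularSystem_of_mem_closure [CompleteSpace E]
    {S : Set (WeakSpace 𝕜 E)} {Λ : WeakDual 𝕜 (StrongDual 𝕜 E)}
    (hΛ : Λ ∈ closure (inclusionInDoubleDualWeak 𝕜 E '' S))
    (hΛ_range : Λ ∉ Set.range (inclusionInDoubleDualWeak 𝕜 E)) :
    ∃ δ > 0, ∃ (f : ℕ → StrongDual 𝕜 E) (y : ℕ → E), (∀ n, ‖f n‖ ≤ 1) ∧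
      (∀ n, toWeakSpace 𝕜 E (y n) ∈ S) ∧ IsTriangularSystem δ f y := by
  classical
  obtain ⟨δ, hδ, exists_functional⟩ :=
    exists_pos_forall_finite_exists_lt_norm_apply (Λ := WeakDual.toStrongDual Λ) fun ⟨y, hy⟩ =>
      hΛ_range ⟨toWeakSpace 𝕜 E y, hy⟩
  obtain ⟨u, hu, hu_lt⟩ := exists_seq_of_forall_finset_exists
    (fun q : StrongDual 𝕜 E × E => ‖q.1‖ ≤ 1 ∧ toWeakSpace 𝕜 E q.2 ∈ S ∧ δ < ‖Λ q.1‖)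
    (fun q r => r.1 q.2 = 0 ∧ δ < ‖q.1 r.2‖) fun A hA => by
      obtain ⟨f, hf, hf_zero, hfΛ⟩ := exists_functional _ (A.image Prod.snd).finite_toSet
      obtain ⟨y, hy, hy_lt⟩ := exists_mem_forall_lt_norm_apply_of_mem_closure hΛ
        (A.image Prod.fst) (Finset.forall_mem_image.2 fun q hq => (hA q hq).2.2)
      exact ⟨(f, (toWeakSpace 𝕜 E).symm y), ⟨hf, hy, hfΛ⟩, fun q hq =>
        ⟨hf_zero _ (Finset.mem_image_of_mem _ hq), hy_lt _ (Finset.mem_image_of_mem _ hq)⟩⟩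
  exact ⟨δ, hδ, fun n => (u n).1, fun n => (u n).2, fun n => (hu n).1, fun n => (hu n).2.1,
    ⟨fun m n hmn => (hu_lt m n hmn).1, fun m n hmn => (hu_lt m n hmn).2⟩⟩

theorem exists_isTriangularSystem_of_not_isCompact_closure {F : Type*}
    [NormedAddCommGroup F] [NormedSpace 𝕜 F] [CompleteSpace F] {S : Set (WeakSpace 𝕜 F)}
    (hS : Bornology.IsBounded (toWeakSpace 𝕜 F ⁻¹' S)) (hS_compact : ¬ IsCompact (closure S)) :
    ∃ δ > 0, ∃ (f : ℕ → StrongDual 𝕜 F) (y : ℕ → F), (∀ n, ‖f n‖ ≤ 1) ∧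
      (∀ n, toWeakSpace 𝕜 F (y n) ∈ S) ∧ IsTriangularSystem δ f y := by
  obtain ⟨Λ, hΛ, hΛ_range⟩ :=
    Set.not_subset.1 (mt (isCompact_closure_of_isBounded 𝕜 F S hS) hS_compact)
  exact exists_isTriangularSystem_of_mem_closure hΛ hΛ_range

end RCLike

theorem isWeaklyCompactOp_iff_isCompact_closure_weakSpace {X Y : Type*}
    [SeminormedAddCommGroup X] [NormedSpace ℝ X] [SeminormedAddCommGroup Y] [NormedSpace ℝ Y]
    (T : X →L[ℝ] Y) :
    IsWeaklyCompactOp T ↔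
      IsCompact (closure ((toWeakSpace ℝ Y).symm ⁻¹' (T '' Metric.closedBall 0 1))) :=
  Iff.rfl

theorem grothendieck_op_to_wstarSeqCompact_weaklyCompact_general (X Y : Type*)
    [SeminormedAddCommGroup X] [NormedSpace ℝ X]
    [NormedAddCommGroup Y] [NormedSpace ℝ Y] [CompleteSpace Y]
    (hX : IsGrothendieck X)
    (hY : ∀ f : ℕ → Y →L[ℝ] ℝ, (∀ n, ‖f n‖ ≤ 1) →
      ∃ (g : Y →L[ℝ] ℝ) (φ : ℕ → ℕ), StrictMono φ ∧
        WeakStarConv Y (fun k => f (φ k)) g)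
    (T : X →L[ℝ] Y) :
    IsWeaklyCompactOp T := by
  rw [isWeaklyCompactOp_iff_isCompact_closure_weakSpace]
  by_contra not_compact
  obtain ⟨δ, hδ, f, y, hf, hy, hfy⟩ := exists_isTriangularSystem_of_not_isCompact_closure
    (S := (toWeakSpace ℝ Y).symm ⁻¹' (T '' Metric.closedBall 0 1))
    (T.lipschitz.isBounded_image Metric.isBounded_closedBall) not_compact
  choose x hx hxy using hy
  obtain rfl : T ∘ x = y := funext hxy
  obtain ⟨g, φ, hφ, hfg⟩ := hY f hf
  have weakConv : WeakConv (X →L[ℝ] ℝ) (fun k => (f (φ k)).comp T) (g.comp T) :=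
    hX _ _ fun z => hfg (T z)
  exact ((hfy.comp_strictMono hφ).comp_clm T).not_forall_bidual_tendsto hδ
    (fun k => mem_closedBall_zero_iff.1 (hx (φ k))) (g.comp T) weakConv

/-- Every operator from a Grothendieck space into a space with weak*-sequentially compact
dual ball is weakly compact. -/
theorem grothendieck_op_to_wstarSeqCompact_weaklyCompact (X Y : Type*)
    [NormedAddCommGroup X] [NormedSpace ℝ X] [CompleteSpace X]
    [NormedAddCommGroup Y] [NormedSpace ℝ Y] [CompleteSpace Y]
    (hX : IsGrothendieck X)
    (hY : ∀ f : ℕ → Y →L[ℝ] ℝ, (∀ n, ‖f n‖ ≤ 1) →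
      ∃ (g : Y →L[ℝ] ℝ) (φ : ℕ → ℕ), StrictMono φ ∧
        WeakStarConv Y (fun k => f (φ k)) g)
    (T : X →L[ℝ] Y) :
    IsWeaklyCompactOp T :=
  grothendieck_op_to_wstarSeqCompact_weaklyCompact_general X Y hX hY T
end

section
/- A Banach space X has no quotient isomorphic to c₀ if and only if every weak*-convergent sequence in X* has a weakly Cauchy subsequence. -/
open Filter Topology ZeroAtInfty

/-- A sequence in `Z` is weakly Cauchy if its image under every functional converges. -/
def WeaklyCauchy (Z : Type*) [SeminormedAddCommGroup Z] [NormedSpace ℝ Z]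
    (f : ℕ → Z) : Prop :=
  ∀ φ : Z →L[ℝ] ℝ, ∃ l : ℝ, Tendsto (fun n => φ (f n)) atTop (𝓝 l)

/-- `X` has a quotient isomorphic to `c₀`. -/
def HasQuotientC0 (X : Type*) [SeminormedAddCommGroup X] [NormedSpace ℝ X] : Prop :=
  ∃ M : Submodule ℝ X, IsClosed (M : Set X) ∧ Nonempty ((X ⧸ M) ≃L[ℝ] C₀(ℕ, ℝ))

/-!
A weak*-convergent sequence may be assumed weak*-null, and then it is the coordinate sequence of an
operator `T : X → c₀`. By Rosenthal's `ℓ₁`-theorem, either some subsequence is weakly Cauchy or some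
subsequence is equivalent to the unit vector basis of `ℓ₁`; by Hahn–Banach the second case excludes
weakly Cauchy subsequences. Since `c₀* = ℓ₁`, an `ℓ₁`-estimate for the coordinates of `T` says that
the adjoint of `T` is bounded below, that is, that `T` maps onto `c₀`.
-/

section Combinatorics

variable {S ι κ : Type*}

/-- `t` lies in infinitely many of the sets `C c n`, `n ∈ M`, for each colour `c`. With the colours
of `levelSets` below this says that the sequence of functions oscillates at `t` along `M`. -/
def Oscillates (C : κ → ℕ → Set S) (t : S) (M : Set ℕ) : Prop :=
  ∀ c, {n ∈ M | t ∈ C c n}.Infinite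

/-- Every infinite subset of `M` has a point of `E` oscillating along it. This is the invariant kept
while an independent subsequence is extracted. -/
def OscillatesIn (C : κ → ℕ → Set S) (E : Set S) (M : Set ℕ) : Prop :=
  ∀ N ⊆ M, N.Infinite → ∃ t ∈ E, Oscillates C t N

/-- Rosenthal's notion of an independent family of colourings: any prescription of colours at
finitely many indices is realised by a point of `E`. -/
def IsIndependentOn (C : κ → ι → Set S) (E : Set S) : Prop :=
  ∀ (ε : ι → κ) (A : Finset ι), ∃ t ∈ E, ∀ i ∈ A, t ∈ C (ε i) i

/-- The sets `{F i < r}` (colour `false`) and `{s < F i}` (colour `true`) of a family of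
functions. -/
def levelSets (F : ι → S → ℝ) (r s : ℝ) : Bool → ι → Set S
  | false, i => {t | F i t < r}
  | true, i => {t | s < F i t}

variable {C : κ → ℕ → Set S} {E : Set S} {M N : Set ℕ} {t : S}

theorem infinite_inter_Ioi (hM : M.Infinite) (n : ℕ) : (M ∩ Set.Ioi n).Infinite :=
  (hM.sdiff (Set.finite_Iic n)).mono fun _ hk => ⟨hk.1, Set.mem_Ioi.2 (not_le.1 hk.2)⟩

theorem finite_range_sdiff_image_Ioi (u : ℕ → ℕ) (j : ℕ) :
    (Set.range u \ u '' Set.Ioi j).Finite := by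
  refine ((Set.finite_Iic j).image u).subset ?_
  rintro _ ⟨⟨k, rfl⟩, hk⟩
  exact ⟨k, Set.mem_Iic.2 (not_lt.1 fun h => hk ⟨k, h, rfl⟩), rfl⟩

theorem exists_strictMono_forall_image_Ioi (P : ℕ → ℕ → Set ℕ → Prop)
    (hP : ∀ j n, Antitone (P j n)) (hM : M.Infinite)
    (h : ∀ j, ∀ n ∈ M, ∀ N ⊆ M, N.Infinite → ∃ N' ⊆ N, N'.Infinite ∧ P j n N') :
    ∃ u : ℕ → ℕ, StrictMono u ∧ ∀ j, u j ∈ M ∧ P j (u j) (u '' Set.Ioi j) := by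
  have step : ∀ j, ∀ N ⊆ M, N.Infinite →
      ∃ n ∈ N, ∃ N' ⊆ N ∩ Set.Ioi n, N'.Infinite ∧ P j n N' := by
    intro j N hNM hN
    obtain ⟨n, hn⟩ := hN.nonempty
    exact ⟨n, hn, h j n (hNM hn) _ (Set.inter_subset_left.trans hNM) (infinite_inter_Ioi hN n)⟩
  choose! n hn next hsub hinf hPn using step
  let R : ℕ → Set ℕ := fun k => Nat.rec M (fun j N => next j N) k
  have hR : ∀ k, R k ⊆ M ∧ (R k).Infinite := by
    intro k
    induction k with
    | zero => exact ⟨subset_rfl, hM⟩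
    | succ k ih =>
      exact ⟨((hsub k _ ih.1 ih.2).trans Set.inter_subset_left).trans ih.1, hinf k _ ih.1 ih.2⟩
  have hsucc : ∀ k, R (k + 1) ⊆ R k ∩ Set.Ioi (n k (R k)) := fun k => hsub k _ (hR k).1 (hR k).2
  have hanti : Antitone R :=
    antitone_nat_of_succ_le fun k => (hsucc k).trans Set.inter_subset_left
  have hmem : ∀ k, n k (R k) ∈ R k := fun k => hn k _ (hR k).1 (hR k).2
  refine ⟨fun k => n k (R k), strictMono_nat_of_lt_succ fun k => (hsucc k (hmem (k + 1))).2,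
    fun j => ⟨(hR j).1 (hmem j), hP _ _ ?_ (hPn j _ (hR j).1 (hR j).2)⟩⟩
  rintro _ ⟨k, hk, rfl⟩
  exact hanti (Nat.succ_le_of_lt hk) (hmem k)

theorem oscillates_monotone (C : κ → ℕ → Set S) (t : S) : Monotone (Oscillates C t) :=
  fun _ _ hMN h c => (h c).mono fun _ hn => ⟨hMN hn.1, hn.2⟩

theorem Oscillates.of_finite_sdiff (h : Oscillates C t N) (hNM : (N \ M).Finite) :
    Oscillates C t M := by
  refine fun c => ((h c).sdiff hNM).mono ?_
  rintro n ⟨⟨hn, ht⟩, hn'⟩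
  exact ⟨by_contra fun hM => hn' ⟨hn, hM⟩, ht⟩

theorem not_oscillatesIn_iff :
    ¬ OscillatesIn C E M ↔ ∃ N ⊆ M, N.Infinite ∧ ∀ t ∈ E, ¬ Oscillates C t N := by
  simp only [OscillatesIn, not_forall, not_exists, not_and, exists_prop]

/-- If every refinement failed, diagonalization would give a sequence `u` such that at each `u j`
some set `E j ∩ C (c j) (u j)` has no point oscillating along the tail of `u`; by pigeonhole
`(E j, c j)` is constant on an infinite set of `j`, along which `E j` must have an oscillating
point. -/
theorem exists_refine_oscillatesIn [Finite κ] {𝓔 : Set (Set S)} (h𝓔 : 𝓔.Finite)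
    (hM : M.Infinite) (h : ∀ E ∈ 𝓔, OscillatesIn C E M) :
    ∃ n ∈ M, ∃ N ⊆ M ∩ Set.Ioi n, N.Infinite ∧ ∀ E ∈ 𝓔, ∀ c, OscillatesIn C (E ∩ C c n) N := by
  by_contra! hcon
  obtain ⟨u, hu, huP⟩ := exists_strictMono_forall_image_Ioi
    (fun _ n N => ∃ E ∈ 𝓔, ∃ c, ∀ t ∈ E ∩ C c n, ¬ Oscillates C t N)
    (fun _ n N N' hN ⟨E, hE, c, hc⟩ => ⟨E, hE, c, fun t ht h =>
      hc t ht (oscillates_monotone C t hN h)⟩) hM (by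
      intro _ n hn N hNM hN
      obtain ⟨E, hE, c, hEc⟩ := hcon n hn _ (Set.inter_subset_inter_left _ hNM)
        (infinite_inter_Ioi hN n)
      obtain ⟨N', hN', hN'inf, hosc⟩ := not_oscillatesIn_iff.1 hEc
      exact ⟨N', hN'.trans Set.inter_subset_left, hN'inf, E, hE, c, hosc⟩)
  choose huM E hE c hc using huP
  have := h𝓔.to_subtype
  obtain ⟨⟨E₀, c₀⟩, hfib⟩ :=
    Finite.exists_infinite_fiber (fun j => ((⟨E j, hE j⟩ : 𝓔), c j))
  rw [Set.infinite_coe_iff] at hfib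
  obtain ⟨t, htE, hosc⟩ := h E₀ E₀.2 _ (by rintro _ ⟨j, -, rfl⟩; exact huM j)
    (hfib.image hu.injective.injOn)
  obtain ⟨_, ⟨j, hj, rfl⟩, htj⟩ := (hosc c₀).nonempty
  obtain ⟨rfl, rfl⟩ := Prod.mk.inj hj
  have hrange : Oscillates C t (Set.range u) :=
    oscillates_monotone C t (Set.image_subset_range u _) hosc
  exact hc j t ⟨htE, htj⟩ (hrange.of_finite_sdiff (finite_range_sdiff_image_Ioi u j))

theorem OscillatesIn.exists_isIndependentOn [Finite κ] (h : OscillatesIn C E M)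
    (hM : M.Infinite) :
    ∃ u : ℕ → ℕ, StrictMono u ∧ IsIndependentOn (fun c j => C c (u j)) E := by
  let Good : Set (Set S) × Set ℕ → Prop := fun σ =>
    σ.1.Finite ∧ σ.2.Infinite ∧ ∀ F ∈ σ.1, OscillatesIn C F σ.2
  have step : ∀ σ : {σ // Good σ}, ∃ (τ : {σ // Good σ}) (n : ℕ), n ∈ σ.1.2 ∧
      τ.1.2 ⊆ σ.1.2 ∩ Set.Ioi n ∧ ∀ F ∈ σ.1.1, ∀ c, F ∩ C c n ∈ τ.1.1 := by
    rintro ⟨⟨𝓔, N⟩, h𝓔, hN, hosc⟩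
    obtain ⟨n, hn, N', hN', hinf, hosc'⟩ := exists_refine_oscillatesIn h𝓔 hN hosc
    refine ⟨⟨(Set.image2 (fun F c => F ∩ C c n) 𝓔 Set.univ, N'),
      h𝓔.image2 _ Set.finite_univ, hinf, ?_⟩, n, hn, hN', fun F hF c => ⟨F, hF, c, trivial, rfl⟩⟩
    rintro _ ⟨F, hF, c, -, rfl⟩
    exact hosc' F hF c
  choose next n hn hsub hmem using step
  let σ : ℕ → {σ // Good σ} := fun k => Nat.rec
    ⟨({E}, M), Set.finite_singleton E, hM, by rintro _ rfl; exact h⟩ (fun _ τ => next τ) k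
  have hcell : ∀ (ε : ℕ → κ) (k : ℕ),
      ∃ F ∈ (σ k).1.1, F ⊆ E ∧ ∀ t ∈ F, ∀ j < k, t ∈ C (ε j) (n (σ j)) := by
    intro ε k
    induction k with
    | zero => exact ⟨E, rfl, subset_rfl, fun _ _ j hj => absurd hj j.not_lt_zero⟩
    | succ k ih =>
      obtain ⟨F, hF, hFE, hFC⟩ := ih
      refine ⟨F ∩ C (ε k) (n (σ k)), hmem (σ k) F hF (ε k), Set.inter_subset_left.trans hFE,
        fun t ht j hj => ?_⟩
      rcases Nat.lt_succ_iff_lt_or_eq.1 hj with hj | rfl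
      · exact hFC t ht.1 j hj
      · exact ht.2
  refine ⟨fun k => n (σ k),
    strictMono_nat_of_lt_succ fun k => (hsub (σ k) (hn (next (σ k)))).2, fun ε A => ?_⟩
  obtain ⟨k, hk⟩ := A.exists_nat_subset_range
  obtain ⟨F, hF, hFE, hFC⟩ := hcell ε k
  obtain ⟨t, ht, -⟩ := (σ k).2.2.2 F hF _ subset_rfl (σ k).2.2.1
  exact ⟨t, hFE ht, fun j hj => hFC t ht j (Finset.mem_range.1 (hk hj))⟩

theorem exists_tendsto_of_forall_rat_not_oscillates {F : ℕ → S → ℝ} {K : ℝ}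
    (hF : ∀ n, |F n t| ≤ K) {u : ℕ → ℕ} (hu : Function.Injective u)
    (h : ∀ a b : ℚ, a < b → ¬ Oscillates (levelSets F a b) t (Set.range u)) :
    ∃ l, Tendsto (fun k => F (u k) t) atTop (𝓝 l) := by
  refine tendsto_of_no_upcrossings Rat.denseRange_cast ?_
    (isBoundedUnder_of ⟨K, fun n => (abs_le.1 (hF _)).2⟩)
    (isBoundedUnder_of ⟨-K, fun n => (abs_le.1 (hF _)).1⟩)
  rintro _ ⟨a, rfl⟩ _ ⟨b, rfl⟩ hab ⟨hlt, hgt⟩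
  have himage : ∀ c, {k | t ∈ levelSets F a b c (u k)}.Infinite →
      {n ∈ Set.range u | t ∈ levelSets F a b c n}.Infinite := fun c hc =>
    (hc.image hu.injOn).mono (by rintro _ ⟨k, hk, rfl⟩; exact ⟨⟨k, rfl⟩, hk⟩)
  refine h a b (Rat.cast_lt.1 hab) ?_
  rintro (_ | _)
  · exact himage false (Nat.frequently_atTop_iff_infinite.1 hlt)
  · exact himage true (Nat.frequently_atTop_iff_infinite.1 hgt)

theorem exists_tendsto_subseq_or_oscillatesIn (F : ℕ → S → ℝ) (E : Set S)
    (hF : ∀ t ∈ E, ∃ K, ∀ n, |F n t| ≤ K) :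
    (∃ u : ℕ → ℕ, StrictMono u ∧ ∀ t ∈ E, ∃ l, Tendsto (fun k => F (u k) t) atTop (𝓝 l)) ∨
      ∃ r s : ℝ, r < s ∧ ∃ M : Set ℕ, M.Infinite ∧ OscillatesIn (levelSets F r s) E M := by
  refine or_iff_not_imp_right.2 fun hcon => ?_
  push Not at hcon
  obtain ⟨q, hq⟩ := exists_surjective_nat (ℚ × ℚ)
  obtain ⟨u, hu, huP⟩ := exists_strictMono_forall_image_Ioi
    (fun j _ M => (q j).1 < (q j).2 → ∀ t ∈ E, ¬ Oscillates (levelSets F (q j).1 (q j).2) t M)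
    (fun j _ M N hMN h hlt t ht ho => h hlt t ht (oscillates_monotone _ t hMN ho))
    Set.infinite_univ (by
      intro j n _ N _ hN
      by_cases hlt : (q j).1 < (q j).2
      · obtain ⟨N', hN', hinf, hosc⟩ :=
          not_oscillatesIn_iff.1 (hcon (q j).1 (q j).2 (Rat.cast_lt.2 hlt) N hN)
        exact ⟨N', hN', hinf, fun _ => hosc⟩
      · exact ⟨N, subset_rfl, hN, fun h => absurd h hlt⟩)
  refine ⟨u, hu, fun t ht => ?_⟩
  obtain ⟨K, hK⟩ := hF t ht
  refine exists_tendsto_of_forall_rat_not_oscillates hK hu.injective fun a b hab hosc => ?_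
  obtain ⟨j, hj⟩ := hq (a, b)
  have hno := (huP j).2
  rw [hj] at hno
  exact hno hab t ht (hosc.of_finite_sdiff (finite_range_sdiff_image_Ioi u j))

end Combinatorics

section LowerL1Estimate

variable {ι ι' Z : Type*} [SeminormedAddCommGroup Z] [NormedSpace ℝ Z] {δ : ℝ} {f : ι → Z}

/-- The linear combinations of the family `f` dominate `δ` times the `ℓ₁`-norm of their
coefficients. For bounded `f` and `δ > 0` this is equivalence of `f` to the unit vector basis of
`ℓ₁`, the opposite estimate being automatic. -/
def HasLowerL1Estimate (δ : ℝ) (f : ι → Z) : Prop :=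
  ∀ (s : Finset ι) (a : ι → ℝ), δ * ∑ i ∈ s, |a i| ≤ ‖∑ i ∈ s, a i • f i‖

theorem HasLowerL1Estimate.comp (hf : HasLowerL1Estimate δ f) {u : ι' → ι}
    (hu : Function.Injective u) : HasLowerL1Estimate δ (fun j => f (u j)) := by
  classical
  intro s a
  have h := hf (s.map ⟨u, hu⟩) (Function.extend u a 0)
  simpa only [Finset.sum_map, Function.Embedding.coeFn_mk, hu.extend_apply] using h

theorem HasLowerL1Estimate.mul_tsum_le (hf : HasLowerL1Estimate δ f) {a : ι → ℝ} {z : Z}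
    (ha : Summable fun i => |a i|) (hz : HasSum (fun i => a i • f i) z) :
    δ * ∑' i, |a i| ≤ ‖z‖ :=
  le_of_tendsto_of_tendsto' (ha.hasSum.mul_left δ) hz.norm fun s => by
    simpa only [Finset.mul_sum] using hf s a

theorem HasLowerL1Estimate.linearIndependent (hf : HasLowerL1Estimate δ f) (hδ : 0 < δ) :
    LinearIndependent ℝ f := by
  refine linearIndependent_iff'.2 fun s a ha i hi => abs_nonpos_iff.1 ?_
  have hsum : ∑ j ∈ s, |a j| ≤ 0 := by
    have h := hf s a
    rw [ha, norm_zero] at h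
    exact nonpos_of_mul_nonpos_right h hδ
  exact (Finset.single_le_sum (fun j _ => abs_nonneg (a j)) hi).trans hsum

theorem HasLowerL1Estimate.exists_functional_apply_eq (hf : HasLowerL1Estimate δ f) (hδ : 0 < δ)
    {c : ι → ℝ} {C : ℝ} (hc : ∀ i, |c i| ≤ C) : ∃ φ : Z →L[ℝ] ℝ, ∀ i, φ (f i) = c i := by
  have hli := hf.linearIndependent hδ
  let φ₀ : Submodule.span ℝ (Set.range f) →ₗ[ℝ] ℝ := Finsupp.linearCombination ℝ c ∘ₗ hli.repr
  have hbound : ∀ z, ‖φ₀ z‖ ≤ |C| * δ⁻¹ * ‖z‖ := by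
    intro z
    set a := hli.repr z
    have hz : ∑ i ∈ a.support, a i • f i = z := hli.linearCombination_repr z
    calc ‖φ₀ z‖ = |∑ i ∈ a.support, a i * c i| := rfl
      _ ≤ ∑ i ∈ a.support, |C| * |a i| := by
        refine (Finset.abs_sum_le_sum_abs _ _).trans (Finset.sum_le_sum fun i _ => ?_)
        rw [abs_mul, mul_comm]
        exact mul_le_mul_of_nonneg_right ((hc i).trans (le_abs_self C)) (abs_nonneg _)
      _ = |C| * δ⁻¹ * (δ * ∑ i ∈ a.support, |a i|) := by
        rw [← Finset.mul_sum]
        field_simp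
      _ ≤ |C| * δ⁻¹ * ‖∑ i ∈ a.support, a i • f i‖ := by
        gcongr
        exact hf _ _
      _ = |C| * δ⁻¹ * ‖z‖ := by rw [hz, Submodule.coe_norm]
  obtain ⟨φ, hφ, -⟩ := exists_extension_norm_eq _ (φ₀.mkContinuous _ hbound)
  refine ⟨φ, fun i => ?_⟩
  have hi := hφ ⟨f i, Submodule.subset_span ⟨i, rfl⟩⟩
  simpa [φ₀, hli.repr_eq_single i ⟨f i, _⟩ rfl] using hi

theorem not_tendsto_neg_one_pow (l : ℝ) : ¬ Tendsto (fun n : ℕ => (-1 : ℝ) ^ n) atTop (𝓝 l) := by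
  intro h
  have hneg : l = -l := tendsto_nhds_unique (h.comp (tendsto_add_atTop_nat 1))
    (h.neg.congr fun n => by simp [pow_succ])
  have habs : |l| = 1 := tendsto_nhds_unique h.abs (by simp)
  rw [self_eq_neg.1 hneg, abs_zero] at habs
  exact zero_ne_one habs

theorem HasLowerL1Estimate.not_weaklyCauchy {f : ℕ → Z} (hf : HasLowerL1Estimate δ f)
    (hδ : 0 < δ) : ¬ WeaklyCauchy Z f := by
  intro hcauchy
  obtain ⟨φ, hφ⟩ := hf.exists_functional_apply_eq hδ (c := fun n => (-1) ^ n) (C := 1) (by simp)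
  obtain ⟨l, hl⟩ := hcauchy φ
  simp only [hφ] at hl
  exact not_tendsto_neg_one_pow l hl

theorem hasLowerL1Estimate_of_isIndependentOn {r s : ℝ}
    (h : IsIndependentOn (levelSets (fun i (φ : Z →L[ℝ] ℝ) => φ (f i)) r s)
      (Metric.closedBall 0 1)) :
    HasLowerL1Estimate ((s - r) / 2) f := by
  intro A a
  obtain ⟨φ, hφ, hφA⟩ := h (fun i => decide (0 ≤ a i)) A
  obtain ⟨ψ, hψ, hψA⟩ := h (fun i => !decide (0 ≤ a i)) A
  rw [mem_closedBall_zero_iff] at hφ hψ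
  have hterm : ∀ i ∈ A, (s - r) * |a i| ≤ (φ - ψ) (a i • f i) := by
    intro i hi
    have hφi := hφA i hi
    have hψi := hψA i hi
    rw [map_smul, smul_eq_mul, sub_apply]
    rcases le_or_gt 0 (a i) with ha | ha
    · simp only [ha, decide_true, Bool.not_true, levelSets, Set.mem_ofPred_eq] at hφi hψi
      rw [abs_of_nonneg ha]
      nlinarith
    · simp only [ha.not_ge, decide_false, Bool.not_false, levelSets, Set.mem_ofPred_eq]
        at hφi hψi
      rw [abs_of_neg ha]
      nlinarith
  have hsum : (s - r) * ∑ i ∈ A, |a i| ≤ 2 * ‖∑ i ∈ A, a i • f i‖ :=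
    calc (s - r) * ∑ i ∈ A, |a i| ≤ (φ - ψ) (∑ i ∈ A, a i • f i) := by
          rw [Finset.mul_sum, map_sum]
          exact Finset.sum_le_sum hterm
      _ ≤ 2 * ‖∑ i ∈ A, a i • f i‖ :=
        (le_abs_self _).trans ((φ - ψ).le_of_opNorm_le
          ((norm_sub_le φ ψ).trans (by linarith)) _)
  linarith

theorem weaklyCauchy_of_forall_mem_closedBall {f : ℕ → Z}
    (h : ∀ φ ∈ Metric.closedBall (0 : Z →L[ℝ] ℝ) 1,
      ∃ l, Tendsto (fun n => φ (f n)) atTop (𝓝 l)) :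
    WeaklyCauchy Z f := by
  intro φ
  have hpos : 0 < ‖φ‖ + 1 := by positivity
  obtain ⟨l, hl⟩ := h ((‖φ‖ + 1)⁻¹ • φ) (by
    rw [mem_closedBall_zero_iff, norm_smul, norm_inv, Real.norm_of_nonneg hpos.le,
      inv_mul_le_one₀ hpos]
    exact (lt_add_one _).le)
  refine ⟨(‖φ‖ + 1) * l, (hl.const_mul (‖φ‖ + 1)).congr fun n => ?_⟩
  rw [smul_apply, smul_eq_mul, mul_inv_cancel_left₀ hpos.ne']

/-- Rosenthal's `ℓ₁`-theorem. -/
theorem exists_weaklyCauchy_subseq_or_hasLowerL1Estimate {f : ℕ → Z} {K : ℝ}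
    (hf : ∀ n, ‖f n‖ ≤ K) :
    (∃ u : ℕ → ℕ, StrictMono u ∧ WeaklyCauchy Z (fun k => f (u k))) ∨
      ∃ u : ℕ → ℕ, StrictMono u ∧ ∃ δ > 0, HasLowerL1Estimate δ (fun k => f (u k)) := by
  have hbdd : ∀ φ ∈ Metric.closedBall (0 : Z →L[ℝ] ℝ) 1, ∃ K, ∀ n, |φ (f n)| ≤ K :=
    fun φ _ => ⟨‖φ‖ * K, fun n => φ.le_opNorm_of_le (hf n)⟩
  rcases exists_tendsto_subseq_or_oscillatesIn (fun n (φ : Z →L[ℝ] ℝ) => φ (f n)) _ hbdd with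
    ⟨u, hu, hconv⟩ | ⟨r, s, hrs, M, hM, hosc⟩
  · exact Or.inl ⟨u, hu, weaklyCauchy_of_forall_mem_closedBall hconv⟩
  · obtain ⟨u, hu, hind⟩ := hosc.exists_isIndependentOn hM
    refine Or.inr ⟨u, hu, (s - r) / 2, half_pos (sub_pos.2 hrs),
      hasLowerL1Estimate_of_isIndependentOn ?_⟩
    convert hind using 2 with c j
    cases c <;> rfl

end LowerL1Estimate

section C0

variable {ι X : Type*} [TopologicalSpace ι] [SeminormedAddCommGroup X] [NormedSpace ℝ X]

theorem c0_norm_le_iff {y : C₀(ι, ℝ)} {K : ℝ} (hK : 0 ≤ K) : ‖y‖ ≤ K ↔ ∀ i, |y i| ≤ K :=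
  BoundedContinuousFunction.norm_le (f := y.toBCF) hK

theorem c0_abs_apply_le (y : C₀(ι, ℝ)) (i : ι) : |y i| ≤ ‖y‖ :=
  (c0_norm_le_iff (norm_nonneg y)).1 le_rfl i

/-- The evaluation functional at `i`. -/
noncomputable def c0Eval (i : ι) : C₀(ι, ℝ) →L[ℝ] ℝ :=
  LinearMap.mkContinuous
    { toFun := fun y => y i
      map_add' := fun _ _ => rfl
      map_smul' := fun _ _ => rfl } 1 fun y => by
    rw [one_mul]
    exact c0_abs_apply_le y i

@[simp]
theorem c0Eval_apply (i : ι) (y : C₀(ι, ℝ)) : c0Eval i y = y i := rfl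

variable [DiscreteTopology ι]

theorem c0_tendsto_cofinite (y : C₀(ι, ℝ)) : Tendsto y cofinite (𝓝 0) := by
  rw [← cocompact_eq_cofinite]
  exact y.zero_at_infty'

/-- The element of `c₀(ι)` with coordinates `a`. -/
def c0Mk (a : ι → ℝ) (ha : Tendsto a cofinite (𝓝 0)) : C₀(ι, ℝ) where
  toFun := a
  continuous_toFun := continuous_of_discreteTopology
  zero_at_infty' := by rwa [cocompact_eq_cofinite]

section UnitVectors

variable [DecidableEq ι]

/-- The unit vectors of `c₀(ι)`. -/
def c0Single (i : ι) : C₀(ι, ℝ) :=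
  c0Mk (Pi.single i 1) (tendsto_const_nhds.congr' (by
    filter_upwards [(Set.finite_singleton i).compl_mem_cofinite] with j hj
    rw [Pi.single_eq_of_ne hj]))

theorem c0_sum_smul_single_apply (a : ι → ℝ) (s : Finset ι) (i : ι) :
    (∑ j ∈ s, a j • c0Single j) i = if i ∈ s then a i else 0 := by
  rw [← c0Eval_apply, map_sum]
  simp [c0Single, c0Mk, Pi.single_apply]

theorem c0_norm_sum_smul_single_le {a : ι → ℝ} {K : ℝ} (hK : 0 ≤ K) {s : Finset ι}
    (ha : ∀ i ∈ s, |a i| ≤ K) : ‖∑ i ∈ s, a i • c0Single i‖ ≤ K := by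
  refine (c0_norm_le_iff hK).2 fun i => ?_
  rw [c0_sum_smul_single_apply]
  split_ifs with hi
  · exact ha i hi
  · rwa [abs_zero]

theorem c0_norm_sum_sign_smul_single_le_one (a : ι → ℝ) (s : Finset ι) :
    ‖∑ i ∈ s, (SignType.sign (a i) : ℝ) • c0Single i‖ ≤ 1 :=
  c0_norm_sum_smul_single_le zero_le_one fun i _ => by
    rcases lt_trichotomy (a i) 0 with h | h | h <;> simp [h]

theorem c0_hasSum_smul_single (y : C₀(ι, ℝ)) : HasSum (fun i => y i • c0Single i) y := by
  refine Metric.tendsto_nhds.2 fun ε hε => ?_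
  have hfin : {i | ε / 2 ≤ |y i|}.Finite := by
    have h := (c0_tendsto_cofinite y).abs.eventually_lt_const
      (show |(0 : ℝ)| < ε / 2 by rw [abs_zero]; exact half_pos hε)
    simpa only [eventually_cofinite, not_lt] using h
  filter_upwards [eventually_ge_atTop hfin.toFinset] with s hs
  rw [dist_comm, dist_eq_norm]
  refine lt_of_le_of_lt ((c0_norm_le_iff (half_pos hε).le).2 fun i => ?_) (half_lt_self hε)
  rw [ZeroAtInftyContinuousMap.sub_apply, c0_sum_smul_single_apply]
  split_ifs with hi
  · simpa using (half_pos hε).le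
  · rw [sub_zero]
    by_contra! hlt
    exact hi (hs (hfin.mem_toFinset.2 hlt.le))

theorem c0_sum_abs_functional_single_le (ψ : C₀(ι, ℝ) →L[ℝ] ℝ) (s : Finset ι) :
    ∑ i ∈ s, |ψ (c0Single i)| ≤ ‖ψ‖ :=
  calc ∑ i ∈ s, |ψ (c0Single i)|
      = ψ (∑ i ∈ s, (SignType.sign (ψ (c0Single i)) : ℝ) • c0Single i) := by
        simp only [map_sum, map_smul, smul_eq_mul, sign_mul_self]
    _ ≤ ‖ψ‖ * 1 := (le_abs_self _).trans
        (ψ.le_opNorm_of_le (c0_norm_sum_sign_smul_single_le_one _ s))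
    _ = ‖ψ‖ := mul_one _

theorem c0_summable_abs_functional_single (ψ : C₀(ι, ℝ) →L[ℝ] ℝ) :
    Summable fun i => |ψ (c0Single i)| :=
  summable_of_sum_le (fun _ => abs_nonneg _) (c0_sum_abs_functional_single_le ψ)

theorem c0_hasSum_apply_mul_functional_single (ψ : C₀(ι, ℝ) →L[ℝ] ℝ) (y : C₀(ι, ℝ)) :
    HasSum (fun i => y i * ψ (c0Single i)) (ψ y) := by
  simpa only [map_smul, smul_eq_mul] using (c0_hasSum_smul_single y).mapL ψ

theorem c0_norm_functional_le_tsum (ψ : C₀(ι, ℝ) →L[ℝ] ℝ) :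
    ‖ψ‖ ≤ ∑' i, |ψ (c0Single i)| := by
  refine ψ.opNorm_le_bound (tsum_nonneg fun _ => abs_nonneg _) fun y => ?_
  refine (c0_hasSum_apply_mul_functional_single ψ y).norm_le_of_bounded
    ((c0_summable_abs_functional_single ψ).hasSum.mul_right ‖y‖) fun i => ?_
  rw [Real.norm_eq_abs, abs_mul, mul_comm]
  gcongr
  exact c0_abs_apply_le y i

theorem c0_hasSum_functional_single_smul_eval_comp (ψ : C₀(ι, ℝ) →L[ℝ] ℝ)
    (T : X →L[ℝ] C₀(ι, ℝ)) :
    HasSum (fun i => ψ (c0Single i) • (c0Eval i).comp T) (ψ.comp T) := by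
  have hbound : ∀ i, ‖ψ (c0Single i) • (c0Eval i).comp T‖ ≤ |ψ (c0Single i)| * ‖T‖ := by
    intro i
    rw [norm_smul, Real.norm_eq_abs]
    gcongr
    exact ContinuousLinearMap.opNorm_le_bound _ (norm_nonneg T) fun x =>
      (c0_abs_apply_le (T x) i).trans (T.le_opNorm x)
  have hsum := (Summable.of_norm_bounded
    ((c0_summable_abs_functional_single ψ).mul_right ‖T‖) hbound).hasSum
  suffices hlim : ψ.comp T = ∑' i, ψ (c0Single i) • (c0Eval i).comp T from hlim ▸ hsum
  refine ContinuousLinearMap.ext fun x =>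
    (c0_hasSum_apply_mul_functional_single ψ (T x)).unique ?_
  simpa [mul_comm] using hsum.mapL (ContinuousLinearMap.apply ℝ ℝ x)

end UnitVectors

theorem c0_mul_norm_le_norm_comp {T : X →L[ℝ] C₀(ι, ℝ)} {δ : ℝ} (hδ : 0 ≤ δ)
    (h : HasLowerL1Estimate δ fun i => (c0Eval i).comp T) (ψ : C₀(ι, ℝ) →L[ℝ] ℝ) :
    δ * ‖ψ‖ ≤ ‖ψ.comp T‖ := by
  classical
  exact (mul_le_mul_of_nonneg_left (c0_norm_functional_le_tsum ψ) hδ).trans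
    (h.mul_tsum_le (c0_summable_abs_functional_single ψ)
      (c0_hasSum_functional_single_smul_eval_comp ψ T))

theorem c0_hasLowerL1Estimate_eval_comp {T : X →L[ℝ] C₀(ι, ℝ)} {C : ℝ} (hC : 0 < C)
    (h : ∀ y, ∃ x, T x = y ∧ ‖x‖ ≤ C * ‖y‖) :
    HasLowerL1Estimate C⁻¹ fun i => (c0Eval i).comp T := by
  classical
  intro s a
  obtain ⟨x, hx, hxC⟩ := h (∑ i ∈ s, (SignType.sign (a i) : ℝ) • c0Single i)
  have hxC' : ‖x‖ ≤ C := hxC.trans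
    (mul_le_of_le_one_right hC.le (c0_norm_sum_sign_smul_single_le_one a s))
  rw [inv_mul_le_iff₀' hC]
  calc ∑ i ∈ s, |a i| = (∑ i ∈ s, a i • (c0Eval i).comp T) x := by
        rw [sum_apply]
        refine Finset.sum_congr rfl fun i hi => ?_
        rw [smul_apply, ContinuousLinearMap.comp_apply, hx, c0Eval_apply,
          c0_sum_smul_single_apply (fun i => (SignType.sign (a i) : ℝ)), if_pos hi, smul_eq_mul,
          self_mul_sign]
    _ ≤ ‖∑ i ∈ s, a i • (c0Eval i).comp T‖ * C :=
      (le_abs_self _).trans ((∑ i ∈ s, a i • (c0Eval i).comp T).le_opNorm_of_le hxC')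

end C0

section ControlledPreimages

variable {X Y : Type*} [SeminormedAddCommGroup X] [NormedSpace ℝ X]

section Seminormed

variable [SeminormedAddCommGroup Y] [NormedSpace ℝ Y] {T : X →L[ℝ] Y}

theorem closedBall_subset_closure_image_of_mul_norm_le_norm_comp {δ : ℝ}
    (h : ∀ ψ : Y →L[ℝ] ℝ, δ * ‖ψ‖ ≤ ‖ψ.comp T‖) :
    Metric.closedBall 0 δ ⊆ closure (T '' Metric.closedBall 0 1) := by
  intro y hy
  by_contra hcl
  have hconv : Convex ℝ (closure (T '' Metric.closedBall 0 1)) :=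
    ((convex_closedBall (0 : X) 1).linear_image T.toLinearMap).closure
  obtain ⟨ψ, u, hu, huy⟩ := geometric_hahn_banach_closed_point hconv isClosed_closure hcl
  have hball : ∀ x : X, ‖x‖ ≤ 1 → ψ (T x) < u := fun x hx =>
    hu _ (subset_closure ⟨x, mem_closedBall_zero_iff.2 hx, rfl⟩)
  have hu0 : 0 ≤ u := by simpa using (hball 0 (by simp)).le
  have hnorm : ‖ψ.comp T‖ ≤ u := by
    refine ContinuousLinearMap.opNorm_le_of_unit_norm hu0 fun x hx => abs_le'.2 ⟨?_, ?_⟩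
    · exact (hball x hx.le).le
    · simpa using (hball (-x) (by rw [norm_neg, hx])).le
  refine huy.not_ge ?_
  calc ψ y ≤ ‖ψ‖ * δ := (le_abs_self _).trans
        (ψ.le_opNorm_of_le (mem_closedBall_zero_iff.1 hy))
    _ = δ * ‖ψ‖ := mul_comm _ _
    _ ≤ u := (h ψ).trans hnorm

theorem exists_approx_preimage_of_closedBall_subset_closure {δ q : ℝ} (hδ : 0 < δ) (hq : 0 < q)
    (h : Metric.closedBall 0 δ ⊆ closure (T '' Metric.closedBall 0 1)) (y : Y) :
    ∃ x, ‖x‖ ≤ δ⁻¹ * ‖y‖ ∧ ‖y - T x‖ ≤ q * ‖y‖ := by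
  rcases (norm_nonneg y).eq_or_lt with hy | hy
  · exact ⟨0, by simp [← hy]⟩
  set c : ℝ := δ / ‖y‖
  have hc : 0 < c := div_pos hδ hy
  have hcy : c • y ∈ Metric.closedBall 0 δ := by
    rw [mem_closedBall_zero_iff, norm_smul, Real.norm_of_nonneg hc.le, div_mul_cancel₀ _ hy.ne']
  obtain ⟨_, ⟨x, hx, rfl⟩, hxy⟩ :=
    Metric.mem_closure_iff.1 (h hcy) (c * (q * ‖y‖)) (by positivity)
  have hres : y - T (c⁻¹ • x) = c⁻¹ • (c • y - T x) := by
    rw [map_smul, smul_sub, inv_smul_smul₀ hc.ne']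
  refine ⟨c⁻¹ • x, ?_, ?_⟩
  · calc ‖c⁻¹ • x‖ = c⁻¹ * ‖x‖ := by rw [norm_smul, norm_inv, Real.norm_of_nonneg hc.le]
      _ ≤ c⁻¹ * 1 := by
        gcongr
        exact mem_closedBall_zero_iff.1 hx
      _ = δ⁻¹ * ‖y‖ := by rw [mul_one, inv_div, div_eq_inv_mul]
  · rw [hres, norm_smul, norm_inv, Real.norm_of_nonneg hc.le, inv_mul_le_iff₀ hc, ← dist_eq_norm]
    exact hxy.le

end Seminormed

variable [NormedAddCommGroup Y] [NormedSpace ℝ Y] {T : X →L[ℝ] Y} {C : ℝ}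

/-- The preimage of `y` is the sum of the approximate preimages `g (r k)` of the successive
residuals `r k`, which decay geometrically. -/
theorem exists_preimage_norm_le_of_approx [CompleteSpace X] {q : ℝ} (hC : 0 ≤ C) (hq₀ : 0 ≤ q)
    (hq₁ : q < 1) (h : ∀ y, ∃ x, ‖x‖ ≤ C * ‖y‖ ∧ ‖y - T x‖ ≤ q * ‖y‖) (y : Y) :
    ∃ x, T x = y ∧ ‖x‖ ≤ C * (1 - q)⁻¹ * ‖y‖ := by
  choose g hg hgr using h
  let r : ℕ → Y := fun k => (fun z => z - T (g z))^[k] y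
  have hr : ∀ k, r (k + 1) = r k - T (g (r k)) := fun k => Function.iterate_succ_apply' _ _ _
  have hrnorm : ∀ k, ‖r k‖ ≤ q ^ k * ‖y‖ := by
    intro k
    induction k with
    | zero => simp [r]
    | succ k ih =>
      rw [hr, pow_succ', mul_assoc]
      exact (hgr _).trans (mul_le_mul_of_nonneg_left ih hq₀)
  have hbound : ∀ k, ‖g (r k)‖ ≤ C * q ^ k * ‖y‖ := fun k => by
    rw [mul_assoc]
    exact (hg _).trans (mul_le_mul_of_nonneg_left (hrnorm k) hC)
  have hgeom : HasSum (fun k => C * q ^ k * ‖y‖) (C * (1 - q)⁻¹ * ‖y‖) :=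
    ((hasSum_geometric_of_lt_one hq₀ hq₁).mul_left C).mul_right ‖y‖
  have hsum := (Summable.of_norm_bounded hgeom.summable hbound).hasSum
  refine ⟨∑' k, g (r k), ?_, hsum.norm_le_of_bounded hgeom hbound⟩
  have hpartial : ∀ k, T (∑ j ∈ Finset.range k, g (r j)) = y - r k := by
    intro k
    induction k with
    | zero => simp [r]
    | succ k ih => rw [Finset.sum_range_succ, map_add, ih, hr]; abel
  have hr0 : Tendsto r atTop (𝓝 0) := squeeze_zero_norm hrnorm (by
    simpa only [zero_mul] using (tendsto_pow_atTop_nhds_zero_of_lt_one hq₀ hq₁).mul_const ‖y‖)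
  have hlim : Tendsto (fun k => T (∑ j ∈ Finset.range k, g (r j))) atTop (𝓝 y) := by
    simpa only [hpartial, sub_zero] using hr0.const_sub y
  exact tendsto_nhds_unique ((T.continuous.tendsto _).comp hsum.tendsto_sum_nat) hlim

theorem exists_preimage_norm_le_of_mul_norm_le_norm_comp [CompleteSpace X] {δ : ℝ} (hδ : 0 < δ)
    (h : ∀ ψ : Y →L[ℝ] ℝ, δ * ‖ψ‖ ≤ ‖ψ.comp T‖) :
    ∃ C > 0, ∀ y, ∃ x, T x = y ∧ ‖x‖ ≤ C * ‖y‖ :=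
  ⟨δ⁻¹ * (1 - 2⁻¹)⁻¹, by norm_num [hδ], exists_preimage_norm_le_of_approx (inv_nonneg.2 hδ.le)
    (by norm_num) (by norm_num) (exists_approx_preimage_of_closedBall_subset_closure hδ
      (by norm_num) (closedBall_subset_closure_image_of_mul_norm_le_norm_comp h))⟩

theorem nonempty_quotient_ker_equiv_of_exists_preimage_norm_le
    (h : ∀ y, ∃ x, T x = y ∧ ‖x‖ ≤ C * ‖y‖) : Nonempty ((X ⧸ T.ker) ≃L[ℝ] Y) := by
  have hT : Function.Surjective T := fun y => (h y).imp fun _ hx => hx.1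
  let e := LinearMap.quotKerEquivOfSurjective T.toLinearMap hT
  refine ⟨e.toContinuousLinearEquivOfBounds _ C (T.ker.liftQL T le_rfl).le_opNorm fun y => ?_⟩
  obtain ⟨x, rfl, hx⟩ := h y
  have hex : e.symm (T x) = Submodule.Quotient.mk x :=
    e.symm_apply_apply (Submodule.Quotient.mk x)
  rw [hex]
  exact (Submodule.Quotient.norm_mk_le _ x).trans hx

theorem exists_preimage_norm_le_of_quotient_equiv {M : Submodule ℝ X} (e : (X ⧸ M) ≃L[ℝ] Y) :
    ∃ C > 0, ∀ y, ∃ x, e (M.mkQL x) = y ∧ ‖x‖ ≤ C * ‖y‖ := by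
  refine ⟨‖(e.symm : Y →L[ℝ] X ⧸ M)‖ + 1, by positivity, fun y => ?_⟩
  rcases eq_or_ne y 0 with rfl | hy
  · exact ⟨0, by simp⟩
  have hlt : ‖e.symm y‖ < (‖(e.symm : Y →L[ℝ] X ⧸ M)‖ + 1) * ‖y‖ :=
    ((e.symm : Y →L[ℝ] X ⧸ M).le_opNorm y).trans_lt
      (mul_lt_mul_of_pos_right (lt_add_one _) (norm_pos_iff.2 hy))
  obtain ⟨x, hx, hxlt⟩ := Submodule.Quotient.norm_mk_lt (e.symm y) (sub_pos.2 hlt)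
  refine ⟨x, ?_, by linarith⟩
  rw [← e.apply_symm_apply y, ← hx]
  rfl

theorem hasQuotientC0_iff_exists_preimage_norm_le :
    HasQuotientC0 X ↔
      ∃ T : X →L[ℝ] C₀(ℕ, ℝ), ∃ C > 0, ∀ y, ∃ x, T x = y ∧ ‖x‖ ≤ C * ‖y‖ := by
  constructor
  · rintro ⟨M, -, ⟨e⟩⟩
    exact ⟨(e : (X ⧸ M) →L[ℝ] C₀(ℕ, ℝ)).comp M.mkQL, exists_preimage_norm_le_of_quotient_equiv e⟩
  · rintro ⟨T, C, -, h⟩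
    exact ⟨T.ker, T.isClosed_ker, nonempty_quotient_ker_equiv_of_exists_preimage_norm_le h⟩

end ControlledPreimages

section JohnsonRosenthal

variable {X : Type*} [SeminormedAddCommGroup X] [NormedSpace ℝ X] {f : ℕ → X →L[ℝ] ℝ}
  {g : X →L[ℝ] ℝ}

theorem WeakStarConv.sub_limit (h : WeakStarConv X f g) : WeakStarConv X (fun n => f n - g) 0 :=
  fun x => by simpa using (h x).sub_const (g x)

theorem WeakStarConv.exists_norm_le [CompleteSpace X] (h : WeakStarConv X f g) :
    ∃ K, ∀ n, ‖f n‖ ≤ K :=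
  banach_steinhaus fun x => by
    obtain ⟨C, hC⟩ := (h x).norm.bddAbove_range
    exact ⟨C, fun n => hC ⟨n, rfl⟩⟩

theorem WeaklyCauchy.add_const {Z : Type*} [SeminormedAddCommGroup Z] [NormedSpace ℝ Z]
    {f : ℕ → Z} (h : WeaklyCauchy Z f) (z : Z) : WeaklyCauchy Z (fun n => f n + z) := by
  intro φ
  obtain ⟨l, hl⟩ := h φ
  exact ⟨l + φ z, by simpa only [map_add] using hl.add_const (φ z)⟩

/-- The operator into `c₀` whose coordinates are the terms of a bounded weak*-null sequence of
functionals. -/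
noncomputable def toC0 (f : ℕ → X →L[ℝ] ℝ) (hf : WeakStarConv X f 0) {K : ℝ}
    (hK : ∀ n, ‖f n‖ ≤ K) : X →L[ℝ] C₀(ℕ, ℝ) :=
  LinearMap.mkContinuous
    { toFun := fun x => c0Mk (fun n => f n x) (by rw [Nat.cofinite_eq_atTop]; exact hf x)
      map_add' := fun x y => by ext n; exact map_add (f n) x y
      map_smul' := fun c x => by ext n; exact map_smul (f n) c x } K fun x =>
    (c0_norm_le_iff (mul_nonneg ((norm_nonneg _).trans (hK 0)) (norm_nonneg x))).2 fun n =>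
      (f n).le_of_opNorm_le (hK n) x

theorem c0Eval_comp_toC0 (hf : WeakStarConv X f 0) {K : ℝ} (hK : ∀ n, ‖f n‖ ≤ K) (n : ℕ) :
    (c0Eval n).comp (toC0 f hf hK) = f n := rfl

theorem weakStarConv_c0Eval_comp (T : X →L[ℝ] C₀(ℕ, ℝ)) :
    WeakStarConv X (fun n => (c0Eval n).comp T) 0 := fun x => by
  rw [← Nat.cofinite_eq_atTop]
  exact c0_tendsto_cofinite (T x)

/-- A theorem of Johnson and Rosenthal. -/
theorem hasQuotientC0_iff_exists_hasLowerL1Estimate [CompleteSpace X] :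
    HasQuotientC0 X ↔
      ∃ f : ℕ → X →L[ℝ] ℝ, WeakStarConv X f 0 ∧ ∃ δ > 0, HasLowerL1Estimate δ f := by
  rw [hasQuotientC0_iff_exists_preimage_norm_le]
  constructor
  · rintro ⟨T, C, hC, h⟩
    exact ⟨_, weakStarConv_c0Eval_comp T, C⁻¹, inv_pos.2 hC, c0_hasLowerL1Estimate_eval_comp hC h⟩
  · rintro ⟨f, hf, δ, hδ, hl1⟩
    obtain ⟨K, hK⟩ := hf.exists_norm_le
    have hcoord : HasLowerL1Estimate δ fun n => (c0Eval n).comp (toC0 f hf hK) := by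
      simpa only [c0Eval_comp_toC0] using hl1
    exact ⟨toC0 f hf hK, exists_preimage_norm_le_of_mul_norm_le_norm_comp hδ
      (c0_mul_norm_le_norm_comp hδ.le hcoord)⟩

theorem no_c0_quotient_iff_weaklyCauchy_subseq_general (X : Type*)
    [SeminormedAddCommGroup X] [NormedSpace ℝ X] [CompleteSpace X] :
    ¬ HasQuotientC0 X ↔
      ∀ (f : ℕ → X →L[ℝ] ℝ) (g : X →L[ℝ] ℝ), WeakStarConv X f g →
        ∃ φ : ℕ → ℕ, StrictMono φ ∧ WeaklyCauchy (X →L[ℝ] ℝ) (fun k => f (φ k)) := by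
  rw [hasQuotientC0_iff_exists_hasLowerL1Estimate]
  constructor
  · intro hX f g hfg
    have hnull := hfg.sub_limit
    obtain ⟨K, hK⟩ := hnull.exists_norm_le
    rcases exists_weaklyCauchy_subseq_or_hasLowerL1Estimate hK with
      ⟨u, hu, hcauchy⟩ | ⟨u, hu, hl1⟩
    · exact ⟨u, hu, by simpa only [sub_add_cancel] using hcauchy.add_const g⟩
    · exact absurd ⟨_, fun x => (hnull x).comp hu.tendsto_atTop, hl1⟩ hX
  · rintro h ⟨f, hf, δ, hδ, hl1⟩
    obtain ⟨u, hu, hcauchy⟩ := h f 0 hf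
    exact (hl1.comp hu.injective).not_weaklyCauchy hδ hcauchy

end JohnsonRosenthal

/-- `X` has no quotient isomorphic to `c₀` iff every weak*-convergent sequence in `X*`
has a weakly Cauchy subsequence. -/
theorem no_c0_quotient_iff_weaklyCauchy_subseq (X : Type*)
    [NormedAddCommGroup X] [NormedSpace ℝ X] [CompleteSpace X] :
    ¬ HasQuotientC0 X ↔
      ∀ (f : ℕ → X →L[ℝ] ℝ) (g : X →L[ℝ] ℝ), WeakStarConv X f g →
        ∃ φ : ℕ → ℕ, StrictMono φ ∧ WeaklyCauchy (X →L[ℝ] ℝ) (fun k => f (φ k)) :=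
  no_c0_quotient_iff_weaklyCauchy_subseq_general X
end

section
/- Every Grothendieck Banach space admitting a Markushevich basis is reflexive. -/
open Filter Topology ZeroAtInfty

/-
The functionals that are nonzero at only countably many members of a fundamental family `x` form a
weak* sequentially closed subspace `Y` of the dual, and a diagonal argument gives every bounded
sequence in `Y` a weak* convergent subsequence. In a Grothendieck space that subsequence converges
weakly, so `Y` is reflexive by the Eberlein–Šmulian theorem. If `Y` is moreover total, then
evaluation identifies `X` with the dual of `Y`: it is injective by totality, and onto because, `Y`
being reflexive, Hahn–Banach makes the image of each ball of `X` dense in the corresponding ball of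
that dual. Hence `Y` is the whole dual of `X`, and `X` is reflexive.
-/

section HahnBanach

variable {E : Type*} [SeminormedAddCommGroup E] [NormedSpace ℝ E]

theorem norm_le_of_forall_apply_le {f : E →L[ℝ] ℝ} {u : ℝ} (h : ∀ z, ‖z‖ ≤ 1 → f z ≤ u) :
    ‖f‖ ≤ u := by
  have hu : 0 ≤ u := by simpa using h 0 (by simp)
  refine ContinuousLinearMap.opNorm_le_of_unit_norm hu fun z hz => ?_
  rw [Real.norm_eq_abs, abs_le']
  exact ⟨h z hz.le, by simpa using h (-z) (by simp [hz])⟩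

theorem mem_closure_image_closedBall_of_forall_le {F : Type*} [AddCommGroup F] [Module ℝ F]
    [TopologicalSpace F] [IsTopologicalAddGroup F] [ContinuousSMul ℝ F] [LocallyConvexSpace ℝ F]
    (T : E →L[ℝ] F) {r : ℝ} (hr : 0 ≤ r) {w : F} (h : ∀ φ : F →L[ℝ] ℝ, φ w ≤ r * ‖φ.comp T‖) :
    w ∈ closure (T '' Metric.closedBall 0 r) := by
  by_contra hw
  obtain ⟨φ, u, hu, huw⟩ := geometric_hahn_banach_closed_point
    ((convex_closedBall (0 : E) r).linear_image (T : E →ₗ[ℝ] F)).closure isClosed_closure hw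
  have hnorm : ‖r • φ.comp T‖ ≤ u := by
    refine norm_le_of_forall_apply_le fun z hz => ?_
    have hrz : r • z ∈ Metric.closedBall (0 : E) r := by
      rw [mem_closedBall_zero_iff, norm_smul, Real.norm_of_nonneg hr]
      exact mul_le_of_le_one_right hr hz
    simpa using (hu _ (subset_closure (Set.mem_image_of_mem T hrz))).le
  rw [norm_smul, Real.norm_of_nonneg hr] at hnorm
  exact huw.not_ge ((h φ).trans hnorm)

/-- **Helly's theorem**. -/
theorem apply_mem_closure_image_closedBall {ι : Type*} [Finite ι] (ψ : ι → E →L[ℝ] ℝ)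
    (Φ : (E →L[ℝ] ℝ) →L[ℝ] ℝ) :
    (fun i => Φ (ψ i)) ∈ closure (ContinuousLinearMap.pi ψ '' Metric.closedBall 0 ‖Φ‖) := by
  classical
  have := Fintype.ofFinite ι
  refine mem_closure_image_closedBall_of_forall_le _ (norm_nonneg Φ) fun c => ?_
  have hc (q : ι → ℝ) : c q = ∑ i, q i • c (Pi.single i 1) := by
    conv_lhs => rw [pi_eq_sum_univ' q, map_sum]
    simp only [map_smul]
  have hcomp : c.comp (ContinuousLinearMap.pi ψ) = ∑ i, c (Pi.single i 1) • ψ i := by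
    ext z
    simp [hc (fun i => ψ i z), mul_comm]
  have hΦ : c (fun i => Φ (ψ i)) = Φ (c.comp (ContinuousLinearMap.pi ψ)) := by
    simp [hc (fun i => Φ (ψ i)), hcomp, mul_comm]
  rw [hΦ]
  exact (Real.le_norm_self _).trans (Φ.le_opNorm _)

theorem exists_norm_le_forall_lt_apply {ι : Type*} [Finite ι] (ψ : ι → E →L[ℝ] ℝ)
    (Φ : (E →L[ℝ] ℝ) →L[ℝ] ℝ) {θ : ℝ} (h : ∀ i, θ < Φ (ψ i)) :
    ∃ z, ‖z‖ ≤ ‖Φ‖ ∧ ∀ i, θ < ψ i z := by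
  have hopen : IsOpen (Set.univ.pi fun _ : ι => Set.Ioi θ) :=
    isOpen_set_pi Set.finite_univ fun _ _ => isOpen_Ioi
  obtain ⟨_, hq, z, hz, rfl⟩ :=
    mem_closure_iff.1 (apply_mem_closure_image_closedBall ψ Φ) _ hopen fun i _ => h i
  exact ⟨z, mem_closedBall_zero_iff.1 hz, fun i => hq i trivial⟩

theorem mem_span_range_of_forall_apply_eq_zero {ι : Type*} [Finite ι] {v : ι → E →L[ℝ] ℝ}
    {f : E →L[ℝ] ℝ} (h : ∀ z, (∀ i, v i z = 0) → f z = 0) :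
    f ∈ Submodule.span ℝ (Set.range v) := by
  have hmem : ContinuousLinearMap.coeLM ℝ f ∈
      (Submodule.span ℝ (Set.range v)).map (ContinuousLinearMap.coeLM ℝ) := by
    rw [Submodule.map_span, ← Set.range_comp]
    refine mem_span_of_iInf_ker_le_ker fun z hz => h z fun i => ?_
    simpa using (Submodule.mem_iInf _).1 hz i
  obtain ⟨k, hk, hkf⟩ := hmem
  exact ContinuousLinearMap.coe_injective hkf ▸ hk

theorem exists_mem_span_range_norm_sub_eq {ι : Type*} [Finite ι] (v : ι → E →L[ℝ] ℝ)
    (Φ : E →L[ℝ] ℝ) :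
    ∃ w ∈ Submodule.span ℝ (Set.range v), ‖Φ - w‖ = ‖Φ.comp (⨅ i, (v i).ker).subtypeL‖ := by
  obtain ⟨Ψ, hΨ, hnorm⟩ :=
    exists_extension_norm_eq (⨅ i, (v i).ker) (Φ.comp (⨅ i, (v i).ker).subtypeL)
  refine ⟨Φ - Ψ, mem_span_range_of_forall_apply_eq_zero fun z hz => ?_, by rwa [sub_sub_cancel]⟩
  have hz' : z ∈ ⨅ i, (v i).ker := by simpa [Submodule.mem_iInf] using hz
  exact sub_eq_zero.2 (hΨ ⟨z, hz'⟩).symm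

theorem exists_norm_le_one_lt_apply_of_forall_mem_span {ι : Type*} [Finite ι] (v : ι → E →L[ℝ] ℝ)
    (Φ : E →L[ℝ] ℝ) {θ : ℝ} (h : ∀ w ∈ Submodule.span ℝ (Set.range v), θ < ‖Φ - w‖) :
    ∃ z, ‖z‖ ≤ 1 ∧ θ < Φ z ∧ ∀ i, v i z = 0 := by
  obtain ⟨w, hw, hnorm⟩ := exists_mem_span_range_norm_sub_eq v Φ
  by_contra! hcon
  refine (hnorm ▸ h w hw).not_ge (norm_le_of_forall_apply_le fun z hz => ?_)
  by_contra! hlt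
  obtain ⟨i, hi⟩ := hcon z hz hlt
  exact hi ((Submodule.mem_iInf _).1 z.2 i)

end HahnBanach

section WeakConvergence

variable {E : Type*} [SeminormedAddCommGroup E] [NormedSpace ℝ E]

/-- **Mazur's theorem** for sequences. -/
theorem WeakConv.mem_of_isClosed_of_convex {z : ℕ → E} {y : E} (h : WeakConv E z y) {s : Set E}
    (hs : IsClosed s) (hconv : Convex ℝ s) (hz : ∀ n, z n ∈ s) : y ∈ s := by
  by_contra hy
  obtain ⟨φ, u, hu, huy⟩ := geometric_hahn_banach_closed_point hconv hs hy
  exact huy.not_ge (le_of_tendsto' (h φ) fun n => (hu _ (hz n)).le)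

theorem WeakConv.of_coe {Y : Submodule ℝ E} {z : ℕ → Y} {y : Y}
    (h : WeakConv E (fun n => z n) y) : WeakConv Y z y := by
  intro φ
  obtain ⟨φ', hφ', -⟩ := exists_extension_norm_eq Y φ
  simpa only [hφ'] using h φ'

theorem not_weakConv_of_forall_apply_eq_zero {z : ℕ → E} {ψ : ℕ → E →L[ℝ] ℝ} {θ : ℝ} (hθ : 0 < θ)
    (hψ : ∀ n, ‖ψ n‖ ≤ 1) (hzero : ∀ m n, m < n → ψ n (z m) = 0)
    (hle : ∀ m n, m < n → θ ≤ ψ m (z n)) (y : E) : ¬ WeakConv E z y := by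
  intro hy
  let S : Set E := {w | Tendsto (fun n => ψ n w) atTop (𝓝 0)}
  have hS_closed : IsClosed S := by
    have hlip (n : ℕ) : LipschitzWith 1 (ψ n) := (ψ n).lipschitz.weaken (hψ n)
    exact (LipschitzWith.uniformEquicontinuous _ 1 hlip).equicontinuous.isClosed_setOfPred_tendsto
      continuous_const
  have hS_convex : Convex ℝ S := fun u hu v hv a b _ _ _ => by
    simpa [S] using (Tendsto.const_mul a hu).add (Tendsto.const_mul b hv)
  have hzS (m : ℕ) : z m ∈ S := tendsto_const_nhds.congr' <| by
    filter_upwards [eventually_gt_atTop m] with n hn using (hzero m n hn).symm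
  have hyS : Tendsto (fun n => ψ n y) atTop (𝓝 0) :=
    hy.mem_of_isClosed_of_convex hS_closed hS_convex hzS
  have hθy (m : ℕ) : θ ≤ ψ m y := ge_of_tendsto (hy (ψ m)) <| by
    filter_upwards [eventually_gt_atTop m] with n hn using hle m n hn
  exact hθ.not_ge (ge_of_tendsto' hyS hθy)

end WeakConvergence

section EberleinSmulian

variable {E : Type*} [SeminormedAddCommGroup E] [NormedSpace ℝ E] [CompleteSpace E]

theorem exists_pos_forall_lt_norm_sub_inclusionInDoubleDual {Φ : (E →L[ℝ] ℝ) →L[ℝ] ℝ}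
    (hΦ : Φ ∉ Set.range (NormedSpace.inclusionInDoubleDual ℝ E)) :
    ∃ θ > 0, ∀ z, θ < ‖Φ - NormedSpace.inclusionInDoubleDual ℝ E z‖ := by
  have hclosed : IsClosed (Set.range (NormedSpace.inclusionInDoubleDual ℝ E)) :=
    (NormedSpace.inclusionInDoubleDualLi ℝ).isometry.isUniformInducing.isComplete_range.isClosed
  obtain ⟨θ, hθ, hθΦ⟩ :=
    exists_between ((hclosed.notMem_iff_infDist_pos (Set.range_nonempty _)).1 hΦ)
  exact ⟨θ, hθ, fun z => (hθΦ.trans_le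
    (Metric.infDist_le_dist_of_mem (Set.mem_range_self z))).trans_eq (dist_eq_norm Φ _)⟩

theorem exists_seq_of_notMem_range_inclusionInDoubleDual {Φ : (E →L[ℝ] ℝ) →L[ℝ] ℝ}
    (hΦ : Φ ∉ Set.range (NormedSpace.inclusionInDoubleDual ℝ E)) :
    ∃ θ > 0, ∃ (ψ : ℕ → E →L[ℝ] ℝ) (z : ℕ → E), (∀ n, ‖ψ n‖ ≤ 1) ∧ (∀ n, ‖z n‖ ≤ ‖Φ‖) ∧
      (∀ m n, m < n → ψ n (z m) = 0) ∧ ∀ m n, m < n → θ < ψ m (z n) := by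
  obtain ⟨θ, hθ, hdist⟩ := exists_pos_forall_lt_norm_sub_inclusionInDoubleDual hΦ
  obtain ⟨a, ha, har⟩ := exists_seq_of_forall_finset_exists
    (fun p : (E →L[ℝ] ℝ) × E => ‖p.1‖ ≤ 1 ∧ θ < Φ p.1 ∧ ‖p.2‖ ≤ ‖Φ‖)
    (fun p q => q.1 p.2 = 0 ∧ θ < p.1 q.2) fun s hs => by
      obtain ⟨ψ, hψ, hψΦ, hψs⟩ := exists_norm_le_one_lt_apply_of_forall_mem_span
        (fun p : s => NormedSpace.inclusionInDoubleDual ℝ E p.1.2) Φ (θ := θ) fun w hw => by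
          have hspan : Submodule.span ℝ (Set.range fun p : s =>
              NormedSpace.inclusionInDoubleDual ℝ E p.1.2) ≤
              (NormedSpace.inclusionInDoubleDual ℝ E).range :=
            Submodule.span_le.2 (Set.range_subset_iff.2 fun p => ⟨p.1.2, rfl⟩)
          obtain ⟨z, rfl⟩ := hspan hw
          exact hdist z
      obtain ⟨z, hz, hzs⟩ :=
        exists_norm_le_forall_lt_apply (fun p : s => p.1.1) Φ fun p => (hs p p.2).2.1
      exact ⟨(ψ, z), ⟨hψ, hψΦ, hz⟩, fun p hp => ⟨hψs ⟨p, hp⟩, hzs ⟨p, hp⟩⟩⟩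
  exact ⟨θ, hθ, fun n => (a n).1, fun n => (a n).2, fun n => (ha n).1, fun n => (ha n).2.2,
    fun m n hmn => (har m n hmn).1, fun m n hmn => (har m n hmn).2⟩

/-- One half of the **Eberlein–Šmulian theorem**. -/
theorem surjective_inclusionInDoubleDual_of_forall_exists_weakConv
    (h : ∀ (z : ℕ → E) (C : ℝ), (∀ n, ‖z n‖ ≤ C) →
      ∃ (φ : ℕ → ℕ) (y : E), StrictMono φ ∧ WeakConv E (z ∘ φ) y) :
    Function.Surjective (NormedSpace.inclusionInDoubleDual ℝ E) := by
  intro Φ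
  by_contra hΦ
  obtain ⟨θ, hθ, ψ, z, hψ, hz, hzero, hlt⟩ := exists_seq_of_notMem_range_inclusionInDoubleDual hΦ
  obtain ⟨φ, y, hφ, hy⟩ := h z ‖Φ‖ hz
  exact not_weakConv_of_forall_apply_eq_zero (ψ := ψ ∘ φ) hθ (fun n => hψ (φ n))
    (fun m n hmn => hzero _ _ (hφ hmn)) (fun m n hmn => (hlt _ _ (hφ hmn)).le) y hy

end EberleinSmulian

section TotalSubspace

theorem surjective_of_forall_exists_norm_sub_le {G H : Type*} [SeminormedAddCommGroup G]
    [CompleteSpace G] [NormedAddCommGroup H] {f : G →+ H} (hf : Continuous f) {C c : ℝ}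
    (hc₀ : 0 ≤ c) (hc₁ : c < 1) (h : ∀ w, ∃ x, ‖x‖ ≤ C * ‖w‖ ∧ ‖w - f x‖ ≤ c * ‖w‖) :
    Function.Surjective f := by
  choose s hs hsf using h
  intro w
  let r : ℕ → H := fun n => (fun v => v - f (s v))^[n] w
  have hr (n : ℕ) : r (n + 1) = r n - f (s (r n)) := Function.iterate_succ_apply' _ _ _
  have hr_norm (n : ℕ) : ‖r n‖ ≤ c ^ n * ‖w‖ := by
    induction n with
    | zero => simp [r]
    | succ n ih =>
      calc ‖r (n + 1)‖ ≤ c * ‖r n‖ := hr n ▸ hsf (r n)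
        _ ≤ c * (c ^ n * ‖w‖) := by gcongr
        _ = c ^ (n + 1) * ‖w‖ := by ring
  have hgeom : Summable fun n : ℕ => c ^ n * ‖w‖ :=
    (summable_geometric_of_lt_one hc₀ hc₁).mul_right _
  have hr_summable : Summable fun n => ‖r n‖ :=
    hgeom.of_nonneg_of_le (fun n => norm_nonneg _) hr_norm
  have hs_summable : Summable fun n => s (r n) :=
    (hr_summable.mul_left C).of_norm_bounded fun n => hs (r n)
  have hr_tendsto : Tendsto r atTop (𝓝 0) :=
    tendsto_zero_iff_norm_tendsto_zero.2 hr_summable.tendsto_atTop_zero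
  have hpartial (n : ℕ) : ∑ i ∈ Finset.range n, f (s (r i)) = w - r n := by
    induction n with
    | zero => simp [r]
    | succ n ih => rw [Finset.sum_range_succ, ih, hr]; abel
  refine ⟨∑' n, s (r n), tendsto_nhds_unique (hs_summable.hasSum.map f hf).tendsto_sum_nat ?_⟩
  simpa [hpartial] using hr_tendsto.const_sub w

variable {X Y : Type*} [NormedAddCommGroup X] [NormedSpace ℝ X] [CompleteSpace X]
  [NormedAddCommGroup Y] [NormedSpace ℝ Y] {j : Y →ₗᵢ[ℝ] (X →L[ℝ] ℝ)}

theorem surjective_flip_of_surjective_inclusionInDoubleDual (j : Y →ₗᵢ[ℝ] (X →L[ℝ] ℝ))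
    (hY : Function.Surjective (NormedSpace.inclusionInDoubleDual ℝ Y)) :
    Function.Surjective j.toContinuousLinearMap.flip := by
  let T : X →L[ℝ] (Y →L[ℝ] ℝ) := j.toContinuousLinearMap.flip
  have hball (F : Y →L[ℝ] ℝ) : F ∈ closure (T '' Metric.closedBall 0 ‖F‖) := by
    refine mem_closure_image_closedBall_of_forall_le T (norm_nonneg F) fun G => ?_
    obtain ⟨g, rfl⟩ := hY G
    calc F g ≤ ‖F‖ * ‖g‖ := (Real.le_norm_self _).trans (F.le_opNorm g)
      _ = ‖F‖ * ‖j g‖ := by rw [j.norm_map]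
  refine surjective_of_forall_exists_norm_sub_le (f := (T : X →+ (Y →L[ℝ] ℝ)))
    T.continuous (C := 1) one_half_pos.le one_half_lt_one fun F => ?_
  rcases eq_or_ne F 0 with rfl | hF
  · exact ⟨0, by simp⟩
  · obtain ⟨_, ⟨x, hx, rfl⟩, hxF⟩ :=
      Metric.mem_closure_iff.1 (hball F) (1 / 2 * ‖F‖) (by positivity)
    exact ⟨x, by simpa using hx, (dist_eq_norm F _ ▸ hxF).le⟩

theorem surjective_of_total (htotal : ∀ x : X, (∀ g, j g x = 0) → x = 0)
    (hY : Function.Surjective (NormedSpace.inclusionInDoubleDual ℝ Y)) : Function.Surjective j := by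
  have hker : j.toContinuousLinearMap.flip.ker = ⊥ :=
    LinearMap.ker_eq_bot'.2 fun x hx => htotal x fun g => DFunLike.congr_fun hx g
  let e : X ≃L[ℝ] (Y →L[ℝ] ℝ) := ContinuousLinearEquiv.ofBijective j.toContinuousLinearMap.flip hker
    (LinearMap.range_eq_top.2 (surjective_flip_of_surjective_inclusionInDoubleDual j hY))
  intro k
  obtain ⟨g, hg⟩ := hY (k.comp (e.symm : (Y →L[ℝ] ℝ) →L[ℝ] X))
  refine ⟨g, ContinuousLinearMap.ext fun x => ?_⟩
  calc j g x = k (e.symm (e x)) := DFunLike.congr_fun hg (e x)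
    _ = k x := by rw [e.symm_apply_apply]

theorem surjective_inclusionInDoubleDual_of_total (htotal : ∀ x : X, (∀ g, j g x = 0) → x = 0)
    (hY : Function.Surjective (NormedSpace.inclusionInDoubleDual ℝ Y)) :
    Function.Surjective (NormedSpace.inclusionInDoubleDual ℝ X) := by
  intro Φ
  obtain ⟨x, hx⟩ :=
    surjective_flip_of_surjective_inclusionInDoubleDual j hY (Φ.comp j.toContinuousLinearMap)
  refine ⟨x, ContinuousLinearMap.ext fun k => ?_⟩
  obtain ⟨g, rfl⟩ := surjective_of_total htotal hY k
  exact DFunLike.congr_fun hx g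

end TotalSubspace

section CountablySupported

variable {X : Type*} [SeminormedAddCommGroup X] [NormedSpace ℝ X] {I : Type*} {x : I → X}

/-- The subspace of the dual formed by the functionals that are nonzero at only countably many
members of the family `x`. When `x` is fundamental, countability of these sets replaces separability
of `X` in extracting weak* convergent subsequences. -/
def countablySupported (x : I → X) : Submodule ℝ (X →L[ℝ] ℝ) where
  carrier := {g | {i | g (x i) ≠ 0}.Countable}
  zero_mem' := by simp
  add_mem' {g h} hg hh := (hg.union hh).mono fun i hi => by
    by_contra! hcon
    simp_all
  smul_mem' c g hg := hg.mono fun i hi => by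
    by_contra! hcon
    simp_all

theorem mem_countablySupported {g : X →L[ℝ] ℝ} :
    g ∈ countablySupported x ↔ {i | g (x i) ≠ 0}.Countable :=
  Iff.rfl

theorem mem_countablySupported_of_forall_ne {g : X →L[ℝ] ℝ} {i : I}
    (h : ∀ j, j ≠ i → g (x j) = 0) : g ∈ countablySupported x :=
  mem_countablySupported.2 <| (Set.countable_singleton i).mono fun j hj =>
    not_imp_comm.1 (h j) hj

theorem WeakStarConv.limit_mem_countablySupported {g : ℕ → X →L[ℝ] ℝ} {g₀ : X →L[ℝ] ℝ}
    (h : WeakStarConv X g g₀) (hg : ∀ n, g n ∈ countablySupported x) :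
    g₀ ∈ countablySupported x := by
  refine mem_countablySupported.2 <|
    (Set.countable_iUnion fun n => mem_countablySupported.1 (hg n)).mono fun i hi => ?_
  by_contra hcon
  have hzero : ∀ n, g n (x i) = 0 := by simpa using hcon
  exact hi (tendsto_nhds_unique (h (x i)) (by simp [hzero]))

theorem isClosed_countablySupported (x : I → X) :
    IsClosed (countablySupported x : Set (X →L[ℝ] ℝ)) := by
  refine IsSeqClosed.isClosed fun g g₀ hg hlim => ?_
  have hweak : WeakStarConv X g g₀ := fun y =>
    ((ContinuousLinearMap.apply ℝ ℝ y).continuous.tendsto g₀).comp hlim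
  exact hweak.limit_mem_countablySupported hg

theorem exists_weakStarConv_of_forall_tendsto {g : ℕ → X →L[ℝ] ℝ} {C : ℝ} (hC : ∀ n, ‖g n‖ ≤ C)
    {s : Set X} (hs : (Submodule.span ℝ s).topologicalClosure = ⊤)
    (h : ∀ y ∈ s, ∃ l, Tendsto (fun n => g n y) atTop (𝓝 l)) :
    ∃ g₀, WeakStarConv X g g₀ := by
  let G : ℕ → WeakDual ℝ X := fun n => StrongDual.toWeakDual (g n)
  have hcompact : IsCompact (WeakDual.toStrongDual ⁻¹' Metric.closedBall (0 : StrongDual ℝ X) C) :=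
    WeakDual.isCompact_closedBall 0 C
  have hmem (n : ℕ) : G n ∈ WeakDual.toStrongDual ⁻¹' Metric.closedBall (0 : StrongDual ℝ X) C :=
    mem_closedBall_zero_iff.2 (hC n)
  have hcluster {k : WeakDual ℝ X} (hk : MapClusterPt k atTop G) {y : X} {l : ℝ}
      (hl : Tendsto (fun n => g n y) atTop (𝓝 l)) : k y = l :=
    eq_of_nhds_neBot <|
      (hk.continuousAt_comp (WeakDual.eval_continuous y).continuousAt).clusterPt.mono hl
  obtain ⟨g₀, -, hg₀⟩ := hcompact.exists_mapClusterPt (f := atTop) (u := G)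
    (tendsto_principal.2 (.of_forall hmem))
  have hunique (k : WeakDual ℝ X) (hk : MapClusterPt k atTop G) : k = g₀ := by
    refine ContinuousLinearMap.ext_on ((Submodule.dense_iff_topologicalClosure_eq_top).2 hs) ?_
    intro y hy
    obtain ⟨l, hl⟩ := h y hy
    exact (hcluster hk hl).trans (hcluster hg₀ hl).symm
  have hlim : Tendsto G atTop (𝓝 g₀) :=
    hcompact.tendsto_nhds_of_unique_mapClusterPt (.of_forall hmem) fun k _ => hunique k
  exact ⟨WeakDual.toStrongDual g₀, fun y => ((WeakDual.eval_continuous y).tendsto g₀).comp hlim⟩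

theorem exists_subseq_forall_tendsto_of_mem_countablySupported {g : ℕ → X →L[ℝ] ℝ} {C : ℝ}
    (hC : ∀ n, ‖g n‖ ≤ C) (hg : ∀ n, g n ∈ countablySupported x) :
    ∃ φ : ℕ → ℕ, StrictMono φ ∧ ∀ i, ∃ l, Tendsto (fun n => g (φ n) (x i)) atTop (𝓝 l) := by
  let J : Set I := ⋃ n, {i | g n (x i) ≠ 0}
  have : Countable J :=
    (Set.countable_iUnion fun n => mem_countablySupported.1 (hg n)).to_subtype
  obtain ⟨a, -, φ, hφ, hlim⟩ := (isCompact_univ_pi fun i : J =>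
    isCompact_closedBall (0 : ℝ) (C * ‖x i‖)).tendsto_subseq
    (x := fun n (i : J) => g n (x i)) fun n i _ => by
      simpa using (g n).le_of_opNorm_le (hC n) (x i)
  refine ⟨φ, hφ, fun i => ?_⟩
  by_cases hi : i ∈ J
  · exact ⟨a ⟨i, hi⟩, tendsto_pi_nhds.1 hlim ⟨i, hi⟩⟩
  · have hzero : ∀ n, g n (x i) = 0 := by simpa [J] using hi
    exact ⟨0, by simp [hzero]⟩

theorem IsGrothendieck.surjective_inclusionInDoubleDual_countablySupported (hX : IsGrothendieck X)
    (hfund : (Submodule.span ℝ (Set.range x)).topologicalClosure = ⊤) :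
    Function.Surjective (NormedSpace.inclusionInDoubleDual ℝ (countablySupported x)) := by
  have : CompleteSpace (countablySupported x) :=
    IsClosed.completeSpace_coe (hs := isClosed_countablySupported x)
  refine surjective_inclusionInDoubleDual_of_forall_exists_weakConv (E := countablySupported x)
    fun z C hC => ?_
  obtain ⟨φ, hφ, hlim⟩ := exists_subseq_forall_tendsto_of_mem_countablySupported hC fun n => (z n).2
  obtain ⟨g, hg⟩ :=
    exists_weakStarConv_of_forall_tendsto (fun n => hC (φ n)) hfund (Set.forall_mem_range.2 hlim)
  exact ⟨φ, ⟨g, hg.limit_mem_countablySupported fun n => (z (φ n)).2⟩, hφ, .of_coe (hX _ _ hg)⟩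

end CountablySupported

theorem grothendieck_with_Mbasis_reflexive_general {X : Type*}
    [NormedAddCommGroup X] [NormedSpace ℝ X] [CompleteSpace X] (hX : IsGrothendieck X)
    {I : Type*} {x : I → X} (hfund : (Submodule.span ℝ (Set.range x)).topologicalClosure = ⊤)
    (htotal : ∀ y : X, (∀ g ∈ countablySupported x, g y = 0) → y = 0) :
    Function.Surjective (NormedSpace.inclusionInDoubleDual ℝ X) :=
  surjective_inclusionInDoubleDual_of_total (Y := countablySupported x)
    (j := (countablySupported x).subtypeₗᵢ) (fun y hy => htotal y fun g hg => hy ⟨g, hg⟩)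
    (hX.surjective_inclusionInDoubleDual_countablySupported hfund)

/-- Johnson: every Grothendieck space admitting a Markushevich basis is reflexive. -/
theorem grothendieck_with_Mbasis_reflexive (X : Type*)
    [NormedAddCommGroup X] [NormedSpace ℝ X] [CompleteSpace X]
    (hX : IsGrothendieck X)
    (I : Type*) (x : I → X) (f : I → X →L[ℝ] ℝ)
    (hbi1 : ∀ i, f i (x i) = 1)
    (hbi2 : ∀ i j, i ≠ j → f i (x j) = 0)
    (hfund : (Submodule.span ℝ (Set.range x)).topologicalClosure = ⊤)
    (htotal : ∀ y : X, (∀ i, f i y = 0) → y = 0) :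
    Function.Surjective (NormedSpace.inclusionInDoubleDual ℝ X) :=
  grothendieck_with_Mbasis_reflexive_general hX hfund fun y hy => htotal y fun i =>
    hy (f i) (mem_countablySupported_of_forall_ne fun j hji => hbi2 i j hji.symm)
end

section
/- If X is a Banach space such that the set At(X) of norm-attaining functionals equals all of X*, then X is reflexive (James's theorem); consequently, for a non-reflexive Grothendieck space X there exists a functional in X* not attaining its norm. -/
open Filter Topology ZeroAtInfty

/-!
Let `X` be a non-reflexive Banach space. Two applications of Goldstine's theorem (to `X` and to
its dual) yield functionals `f n` and points `x n` of the unit balls with `f n (x m) < δ` and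
`2 * δ < f m (x n)` for `m < n`; hence every convex combination of the `f n` is at distance at
least `δ` from every weak* limit `w` of the sequence. By convexity one can choose `g n` in the
convex hulls of the tails so that, for weights `r ^ n`, each partial sum of `∑ r ^ n • (g n - w)`
exceeds the previous one in norm by a fixed multiple of `r ^ n`. By Pryce's lemma the norms of
these partial sums would be the same with `w` replaced by a weak* cluster point `w'` of `g`. If
`r` is small then `F = ∑ r ^ n • (g n - w')` does not attain its norm: for `x` in the unit ball
some `(g n - w') x` is almost nonpositive, so `F x` is hardly more than the norm of the `n`-th
partial sum, and this is less than the norm of the next one, which is at most `‖F‖`.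
-/

section James

open Set Metric

section Goldstine

variable {X : Type*} [NormedAddCommGroup X] [NormedSpace ℝ X]

theorem exists_norm_lt_one_lt_apply_of_lt_norm {f : StrongDual ℝ X} {c : ℝ} (hc : c < ‖f‖) :
    ∃ x, ‖x‖ < 1 ∧ c < f x := by
  obtain ⟨x, hx, hcx⟩ := f.exists_lt_apply_of_lt_opNorm hc
  rcases lt_abs.1 hcx with h | h
  · exact ⟨x, hx, h⟩
  · exact ⟨-x, by rwa [norm_neg], by rwa [map_neg]⟩

theorem apply_le_norm_of_norm_le_one (f : StrongDual ℝ X) {x : X} (hx : ‖x‖ ≤ 1) :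
    f x ≤ ‖f‖ :=
  (le_abs_self _).trans (f.unit_le_opNorm x hx)

theorem exists_forall_weakDual_eval_eq {𝕜 E : Type*} [NontriviallyNormedField 𝕜] [AddCommGroup E]
    [Module 𝕜 E] [TopologicalSpace E] [IsTopologicalAddGroup E] [ContinuousConstSMul 𝕜 E]
    (ev : StrongDual 𝕜 (WeakDual 𝕜 E)) : ∃ x : E, ∀ f : WeakDual 𝕜 E, ev f = f x := by
  obtain ⟨x, rfl⟩ := LinearMap.dualEmbedding_surjective (topDualPairing 𝕜 E) ev
  exact ⟨x, fun _ => rfl⟩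

/-- **Goldstine's theorem**. -/
theorem mem_closure_image_inclusionInDoubleDual_of_norm_le_one
    {φ : StrongDual ℝ (StrongDual ℝ X)} (hφ : ‖φ‖ ≤ 1) :
    StrongDual.toWeakDual φ ∈ closure
      (StrongDual.toWeakDual '' (NormedSpace.inclusionInDoubleDual ℝ X '' closedBall 0 1)) := by
  by_contra hmem
  have hconv : Convex ℝ (StrongDual.toWeakDual ''
      (NormedSpace.inclusionInDoubleDual ℝ X '' closedBall 0 1)) :=
    ((convex_closedBall 0 1).linear_image
      (NormedSpace.inclusionInDoubleDual ℝ X).toLinearMap).linear_image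
      StrongDual.toWeakDual.toLinearMap
  have : LocallyConvexSpace ℝ (WeakDual ℝ (StrongDual ℝ X)) :=
    (WeakDual.withSeminorms ℝ (StrongDual ℝ X)).toLocallyConvexSpace
  obtain ⟨ev, u, hball, hu⟩ :=
    geometric_hahn_banach_closed_point hconv.closure isClosed_closure hmem
  obtain ⟨f, hf⟩ := exists_forall_weakDual_eval_eq ev
  simp only [hf] at hball hu
  have hfu : ‖f‖ ≤ u := by
    by_contra! hlt
    obtain ⟨x, hx, hux⟩ := exists_norm_lt_one_lt_apply_of_lt_norm hlt
    exact hux.not_gt (hball _ (subset_closure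
      (mem_image_of_mem _ (mem_image_of_mem _ (by simpa using hx.le)))))
  have hφf : φ f ≤ ‖f‖ := by
    simpa using (le_abs_self _).trans (φ.le_of_opNorm_le hφ f)
  exact (hfu.trans_lt hu).not_ge hφf

theorem exists_norm_le_one_forall_mem_finset_abs_sub_lt {φ : StrongDual ℝ (StrongDual ℝ X)}
    (hφ : ‖φ‖ ≤ 1) (s : Finset (StrongDual ℝ X)) {ε : ℝ} (hε : 0 < ε) :
    ∃ x : X, ‖x‖ ≤ 1 ∧ ∀ f ∈ s, |f x - φ f| < ε := by
  let N : Set (WeakDual ℝ (StrongDual ℝ X)) := ⋂ f ∈ s, {ψ | |ψ f - φ f| < ε}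
  have hN : IsOpen N := isOpen_biInter_finset fun f _ => isOpen_lt
    ((WeakDual.eval_continuous f).sub continuous_const).abs continuous_const
  obtain ⟨_, hxN, _, ⟨x, hx, rfl⟩, rfl⟩ := mem_closure_iff.1
    (mem_closure_image_inclusionInDoubleDual_of_norm_le_one hφ) N hN (by simp [N, hε])
  exact ⟨x, by simpa using hx, by simpa [N] using hxN⟩

end Goldstine

section NonReflexive

variable {X : Type*} [NormedAddCommGroup X] [NormedSpace ℝ X]

theorem exists_strongDual_forall_mem_submodule_eq_zero_of_notMem {p : Submodule ℝ X}
    (hp : IsClosed (p : Set X)) {x : X} (hx : x ∉ p) :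
    ∃ f : StrongDual ℝ X, ‖f‖ ≤ 1 ∧ (∀ y ∈ p, f y = 0) ∧ 0 < f x := by
  obtain ⟨f, u, hf, hu⟩ := geometric_hahn_banach_closed_point p.convex hp hx
  have hu0 : 0 < u := by simpa using hf 0 p.zero_mem
  have hfp (y) (hy : y ∈ p) : f y = 0 := by
    by_contra hne
    have := hf _ (p.smul_mem (f x / f y) hy)
    rw [map_smul, smul_eq_mul, div_mul_cancel₀ _ hne] at this
    exact this.not_gt hu
  have hf0 : f ≠ 0 := by
    rintro rfl
    exact (hu0.trans hu).ne rfl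
  refine ⟨‖f‖⁻¹ • f, (norm_smul_inv_norm (𝕜 := ℝ) hf0).le, fun y hy => by simp [hfp y hy], ?_⟩
  exact mul_pos (inv_pos.2 (norm_pos_iff.2 hf0)) (hu0.trans hu)

theorem isClosed_range_inclusionInDoubleDual_s19 [CompleteSpace X] :
    IsClosed (range (NormedSpace.inclusionInDoubleDual ℝ X)) :=
  (NormedSpace.inclusionInDoubleDualLi (E := X) ℝ).isometry.isUniformInducing.isComplete_range
    |>.isClosed

set_option maxSynthPendingDepth 4 in
theorem exists_norm_le_one_forall_inclusionInDoubleDual_eq_zero [CompleteSpace X]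
    (h : ¬ Function.Surjective (NormedSpace.inclusionInDoubleDual ℝ X)) :
    ∃ φ : StrongDual ℝ (StrongDual ℝ X), ‖φ‖ ≤ 1 ∧
      ∃ Ψ : StrongDual ℝ (StrongDual ℝ (StrongDual ℝ X)), ‖Ψ‖ ≤ 1 ∧
        (∀ x, Ψ (NormedSpace.inclusionInDoubleDual ℝ X x) = 0) ∧ 0 < Ψ φ := by
  obtain ⟨φ₀, hφ₀⟩ := not_forall.1 h
  obtain ⟨Ψ, hΨ, hΨJ, hΨφ₀⟩ := exists_strongDual_forall_mem_submodule_eq_zero_of_notMem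
    (p := LinearMap.range (NormedSpace.inclusionInDoubleDual ℝ X).toLinearMap) (x := φ₀)
    isClosed_range_inclusionInDoubleDual_s19 hφ₀
  have hφ₀0 : φ₀ ≠ 0 := by
    rintro rfl
    simp at hΨφ₀
  refine ⟨‖φ₀‖⁻¹ • φ₀, (norm_smul_inv_norm (𝕜 := ℝ) hφ₀0).le, Ψ, hΨ, fun x => hΨJ _ ⟨x, rfl⟩, ?_⟩
  rw [map_smul]
  exact mul_pos (inv_pos.2 (norm_pos_iff.2 hφ₀0)) hΨφ₀

set_option maxSynthPendingDepth 4 in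
theorem exists_seq_triangular_of_not_surjective_inclusionInDoubleDual [CompleteSpace X]
    (h : ¬ Function.Surjective (NormedSpace.inclusionInDoubleDual ℝ X)) :
    ∃ δ > 0, ∃ (f : ℕ → StrongDual ℝ X) (x : ℕ → X), (∀ n, ‖f n‖ ≤ 1) ∧ (∀ n, ‖x n‖ ≤ 1) ∧
      (∀ m n, m < n → f n (x m) < δ) ∧ ∀ m n, m < n → 2 * δ < f m (x n) := by
  classical
  obtain ⟨φ, hφ, Ψ, hΨ, hΨJ, hΨφ⟩ := exists_norm_le_one_forall_inclusionInDoubleDual_eq_zero h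
  let J := NormedSpace.inclusionInDoubleDual ℝ X
  obtain ⟨δ, hδ, hΨδ⟩ : ∃ δ > 0, Ψ φ = 4 * δ := ⟨Ψ φ / 4, by positivity, by ring⟩
  -- `f` approximates `Ψ` on `φ` and on the earlier points; `x` approximates `φ` on the earlier
  -- functionals.
  have hext (s : Finset (StrongDual ℝ X × X))
      (hs : ∀ p ∈ s, ‖p.1‖ ≤ 1 ∧ ‖p.2‖ ≤ 1 ∧ 3 * δ < φ p.1) :
      ∃ q : StrongDual ℝ X × X, (‖q.1‖ ≤ 1 ∧ ‖q.2‖ ≤ 1 ∧ 3 * δ < φ q.1) ∧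
        ∀ p ∈ s, q.1 p.2 < δ ∧ 2 * δ < p.1 q.2 := by
    obtain ⟨f, hf, hfΨ⟩ := exists_norm_le_one_forall_mem_finset_abs_sub_lt hΨ
      (insert φ (s.image fun p => J p.2)) hδ
    obtain ⟨x, hx, hxφ⟩ := exists_norm_le_one_forall_mem_finset_abs_sub_lt hφ
      (s.image Prod.fst) hδ
    refine ⟨(f, x), ⟨hf, hx, ?_⟩, fun p hp => ⟨?_, ?_⟩⟩
    · have := (abs_lt.1 (hfΨ φ (Finset.mem_insert_self _ _))).1
      linarith
    · have := hfΨ (J p.2) (Finset.mem_insert_of_mem (Finset.mem_image_of_mem _ hp))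
      rw [hΨJ, sub_zero] at this
      exact (abs_lt.1 this).2
    · have := (abs_lt.1 (hxφ p.1 (Finset.mem_image_of_mem _ hp))).1
      linarith [(hs p hp).2.2]
  obtain ⟨p, hp, hpq⟩ := exists_seq_of_forall_finset_exists _ _ hext
  exact ⟨δ, hδ, fun n => (p n).1, fun n => (p n).2, fun n => (hp n).1, fun n => (hp n).2.1,
    fun m n hmn => (hpq m n hmn).1, fun m n hmn => (hpq m n hmn).2⟩

end NonReflexive

section Limits

variable {X : Type*} [NormedAddCommGroup X] [NormedSpace ℝ X] {V : Filter (StrongDual ℝ X)}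
  {w : StrongDual ℝ X}

/-- `w` lies pointwise between the lower and the upper limit along `V`. The lower limit enters
through its eventual lower bounds, as `liminf` would take junk values along unbounded filters; the
upper limit is accounted for by the points `-x`. -/
def IsBetweenLimits (V : Filter (StrongDual ℝ X)) (w : StrongDual ℝ X) : Prop :=
  ∀ x c, (∀ᶠ h in V, c ≤ h x) → c ≤ w x

theorem IsBetweenLimits.le_of_eventually_le (hw : IsBetweenLimits V w) {x : X} {c : ℝ}
    (hc : ∀ᶠ h in V, h x ≤ c) : w x ≤ c := by
  simpa using hw (-x) (-c) (by simpa using hc)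

theorem IsBetweenLimits.mono {V' : Filter (StrongDual ℝ X)} (hw : IsBetweenLimits V w)
    (hV : V ≤ V') : IsBetweenLimits V' w :=
  fun x c hc => hw x c (hV hc)

theorem exists_norm_le_isBetweenLimits [V.NeBot] {r : ℝ} (hV : closedBall 0 r ∈ V) :
    ∃ w, ‖w‖ ≤ r ∧ IsBetweenLimits V w := by
  let U := Ultrafilter.of V
  obtain ⟨w, hw, hUw⟩ := (WeakDual.isCompact_closedBall (0 : StrongDual ℝ X) r).ultrafilter_le_nhds
    (U.map StrongDual.toWeakDual)
    (le_principal_iff.2 (mem_map.2 (Ultrafilter.of_le V hV)))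
  refine ⟨WeakDual.toStrongDual w, by simpa using hw, fun x c hc => ?_⟩
  have hx : Tendsto (fun h : StrongDual ℝ X => h x) U (𝓝 (w x)) :=
    ((WeakDual.eval_continuous x).tendsto w).comp hUw
  exact ge_of_tendsto hx (Ultrafilter.of_le V hc)

theorem IsBetweenLimits.of_mem_convexHull {U : ℕ → Set (StrongDual ℝ X)}
    (hU : V.HasAntitoneBasis U) {g : ℕ → StrongDual ℝ X} (hg : ∀ n, g n ∈ convexHull ℝ (U n))
    (hw : IsBetweenLimits (map g atTop) w) : IsBetweenLimits V w := by
  intro x c hc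
  obtain ⟨n, hn⟩ := hU.mem_iff.1 hc
  have hconv : Convex ℝ {h : StrongDual ℝ X | c ≤ h x} :=
    convex_halfSpace_ge (ContinuousLinearMap.apply ℝ ℝ x).isLinear c
  exact hw x c (eventually_map.2 ((eventually_ge_atTop n).mono fun m hm =>
    convexHull_min ((hU.antitone hm).trans hn) hconv (hg m)))

end Limits

section Pryce

theorem exists_filter_le_forall_stable {α : Type*} {P : ℕ → Filter α → Prop}
    (hP : ∀ i, Antitone (P i)) (V₀ : Filter α) [V₀.NeBot] [V₀.IsCountablyGenerated] :
    ∃ V ≤ V₀, V.NeBot ∧ V.IsCountablyGenerated ∧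
      ∀ i, ∀ V' ≤ V, V'.NeBot → V'.IsCountablyGenerated → P i V' → P i V := by
  let G := {V : Filter α // V.NeBot ∧ V.IsCountablyGenerated}
  have exists_next (i : ℕ) (V : G) : ∃ V' : G, V'.1 ≤ V.1 ∧
      ∀ W : G, W.1 ≤ V'.1 → P i W.1 → P i V'.1 := by
    by_cases h : ∃ V' : G, V'.1 ≤ V.1 ∧ P i V'.1
    · obtain ⟨V', hV', hPV'⟩ := h
      exact ⟨V', hV', fun _ _ _ => hPV'⟩
    · exact ⟨V, le_rfl, fun W hW hPW => (h ⟨W, hW, hPW⟩).elim⟩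
  choose next hle hdec using exists_next
  let v : ℕ → G := fun n => Nat.rec ⟨V₀, ‹_›, ‹_›⟩ next n
  have hanti : Antitone fun n => (v n).1 := antitone_nat_of_succ_le fun n => hle n (v n)
  have hne (n : ℕ) : (v n).1.NeBot := (v n).2.1
  have hcg (n : ℕ) : (v n).1.IsCountablyGenerated := (v n).2.2
  have : Nonempty α := nonempty_of_neBot V₀
  refine ⟨⨅ n, (v n).1, iInf_le _ 0, iInf_neBot_of_directed hanti.directed_ge hne, inferInstance,
    fun i V' hV' hne' hcg' hi => ?_⟩
  have hV'v : V' ≤ (v (i + 1)).1 := hV'.trans (iInf_le _ (i + 1))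
  exact hP i (iInf_le _ (i + 1)) (hdec i (v i) ⟨V', hne', hcg'⟩ hV'v hi)

variable {X : Type*} [NormedAddCommGroup X] [NormedSpace ℝ X] {V : Filter (StrongDual ℝ X)}
  {g w : StrongDual ℝ X} {c : ℝ}

/-- A single point of the unit ball witnesses that `g` is at distance at least `c` from almost all
functionals along `V`. This property is inherited by finer filters. -/
def HasCommonWitness (V : Filter (StrongDual ℝ X)) (g : StrongDual ℝ X) (c : ℝ) : Prop :=
  ∃ x : X, ‖x‖ ≤ 1 ∧ ∀ᶠ h in V, c ≤ (g - h) x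

theorem antitone_hasCommonWitness (g : StrongDual ℝ X) (c : ℝ) :
    Antitone fun V => HasCommonWitness V g c :=
  fun _ _ hV ⟨x, hx, h⟩ => ⟨x, hx, hV h⟩

theorem HasCommonWitness.le_norm_sub (h : HasCommonWitness V g c) (hw : IsBetweenLimits V w) :
    c ≤ ‖g - w‖ := by
  obtain ⟨x, hx, hev⟩ := h
  have hwx : w x ≤ g x - c := hw.le_of_eventually_le (hev.mono fun h hh => le_sub_comm.1 hh)
  calc c ≤ (g - w) x := le_sub_comm.1 hwx
    _ ≤ ‖g - w‖ := apply_le_norm_of_norm_le_one _ hx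

theorem IsBetweenLimits.exists_le_hasCommonWitness [V.IsCountablyGenerated]
    (hw : IsBetweenLimits V w) (hc : c < ‖g - w‖) :
    ∃ V' ≤ V, V'.NeBot ∧ V'.IsCountablyGenerated ∧ HasCommonWitness V' g c := by
  obtain ⟨x, hx, hcx⟩ := exists_norm_lt_one_lt_apply_of_lt_norm hc
  have hfreq : ∃ᶠ h in V, c ≤ (g - h) x := by
    intro hev
    have : g x - c ≤ w x := hw x _ (hev.mono fun h hh => (sub_lt_comm.1 (not_le.1 hh)).le)
    exact hcx.not_ge (sub_le_comm.1 this)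
  exact ⟨V ⊓ 𝓟 {h | c ≤ (g - h) x}, inf_le_left, frequently_mem_iff_neBot.1 hfreq, inferInstance,
    x, hx.le, mem_inf_of_right (mem_principal_self _)⟩

/-- **Pryce's lemma**. For `g` in a countable dense set and rational `c`, the filter is refined
until `HasCommonWitness _ g c` either holds or fails for all further refinements. -/
theorem exists_filter_le_forall_norm_sub_eq (V₀ : Filter (StrongDual ℝ X)) [V₀.NeBot]
    [V₀.IsCountablyGenerated] {S : Set (StrongDual ℝ X)} (hS : TopologicalSpace.IsSeparable S) :
    ∃ V ≤ V₀, V.NeBot ∧ V.IsCountablyGenerated ∧ ∀ g ∈ S, ∀ w w', IsBetweenLimits V w →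
      IsBetweenLimits V w' → ‖g - w‖ = ‖g - w'‖ := by
  obtain ⟨D, hD, hSD⟩ := hS
  obtain ⟨d, hd⟩ := ((hD.insert 0).prod (countable_univ (α := ℚ))).exists_eq_range ⟨(0, 0), by simp⟩
  obtain ⟨V, hV, hne, hcg, hstable⟩ := exists_filter_le_forall_stable
    (fun i => antitone_hasCommonWitness (d i).1 (d i).2) V₀
  refine ⟨V, hV, hne, hcg, fun g hg w w' hw hw' => ?_⟩
  have hle (g) (hg : g ∈ D) (w w') (hw : IsBetweenLimits V w) (hw' : IsBetweenLimits V w') :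
      ‖g - w‖ ≤ ‖g - w'‖ := by
    refine le_of_forall_rat_lt_imp_le fun c hc => ?_
    obtain ⟨i, hi⟩ : (g, c) ∈ range d := hd ▸ ⟨mem_insert_of_mem _ hg, mem_univ _⟩
    obtain ⟨V', hV', hne', hcg', hwit⟩ := hw.exists_le_hasCommonWitness hc
    have hwitV := hstable i V' hV' hne' hcg' (by rwa [hi])
    rw [hi] at hwitV
    exact hwitV.le_norm_sub hw'
  have hclosed : IsClosed {g | ‖g - w‖ = ‖g - w'‖} := isClosed_eq (by fun_prop) (by fun_prop)
  exact closure_minimal (fun g hg => (hle g hg w w' hw hw').antisymm (hle g hg w' w hw' hw))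
    hclosed (hSD hg)

end Pryce

section Growth

variable {E : Type*} [NormedAddCommGroup E] [NormedSpace ℝ E] {A : Set E} {u a₀ a : E}
  {b b' α m : ℝ}

theorem add_mul_le_norm_add_smul_add_smul (hA : Convex ℝ A) (hb : 0 < b) (hb' : 0 < b')
    (hm : ∀ a ∈ A, m ≤ ‖u + b • a‖) (ha₀ : a₀ ∈ A) (ha : a ∈ A) :
    (b + b') * m ≤ b' * ‖u‖ + b * ‖u + b • a₀ + b' • a‖ := by
  have hs : 0 < b + b' := add_pos hb hb'
  let z := (b / (b + b')) • a₀ + (b' / (b + b')) • a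
  have hz : z ∈ A := hA ha₀ ha (by positivity) (by positivity) (by field_simp)
  have hsz : (b + b') • z = b • a₀ + b' • a := by
    simp only [z, smul_add, smul_smul, mul_div_cancel₀ _ hs.ne']
  calc (b + b') * m ≤ (b + b') * ‖u + b • z‖ := by gcongr; exact hm z hz
    _ = ‖(b + b') • (u + b • z)‖ := by rw [norm_smul, Real.norm_of_nonneg hs.le]
    _ = ‖b' • u + b • (u + b • a₀ + b' • a)‖ := by
      rw [smul_add, smul_comm _ b, hsz]
      congr 1
      module
    _ ≤ ‖b' • u‖ + ‖b • (u + b • a₀ + b' • a)‖ := norm_add_le _ _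
    _ = b' * ‖u‖ + b * ‖u + b • a₀ + b' • a‖ := by
      rw [norm_smul, norm_smul, Real.norm_of_nonneg hb'.le, Real.norm_of_nonneg hb.le]

/-- Adding `b • a` to `u` increases the norm by more than `b * α`, uniformly over `a ∈ A`. This is
the invariant maintained by James' inductive construction. -/
def HasUniformGrowth (A : Set E) (u : E) (b α : ℝ) : Prop :=
  ∃ M > b * α + ‖u‖, ∀ a ∈ A, M ≤ ‖u + b • a‖

theorem HasUniformGrowth.anti {A' : Set E} (h : HasUniformGrowth A u b α) (hA : A' ⊆ A) :
    HasUniformGrowth A' u b α :=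
  h.imp fun _ hM => ⟨hM.1, fun a ha => hM.2 a (hA ha)⟩

theorem hasUniformGrowth_zero {α' : ℝ} (hb : 0 < b) (hα : α < α') (hA : ∀ a ∈ A, α' ≤ ‖a‖) :
    HasUniformGrowth A 0 b α := by
  refine ⟨b * α', by simpa using mul_lt_mul_of_pos_left hα hb, fun a ha => ?_⟩
  rw [zero_add, norm_smul, Real.norm_of_nonneg hb.le]
  exact mul_le_mul_of_nonneg_left (hA a ha) hb.le

theorem HasUniformGrowth.exists_add_smul (hA : Convex ℝ A) (hne : A.Nonempty) (hb : 0 < b)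
    (hb' : 0 < b') (h : HasUniformGrowth A u b α) :
    ∃ a ∈ A, HasUniformGrowth A (u + b • a) b' α := by
  obtain ⟨M, hM, hMA⟩ := h
  let N : E → ℝ := fun a => ‖u + b • a‖
  obtain ⟨m, hglb⟩ := Real.exists_isGLB (hne.image N) ⟨M, forall_mem_image.2 hMA⟩
  have hMm : M ≤ m := hglb.2 (forall_mem_image.2 hMA)
  have hm (a) (ha : a ∈ A) : m ≤ ‖u + b • a‖ := hglb.1 (mem_image_of_mem N ha)
  have hη : 0 < b' / b * (m - ‖u‖ - b * α) := mul_pos (by positivity) (by linarith)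
  obtain ⟨_, ⟨a₀, ha₀, rfl⟩, -, hlt⟩ := hglb.exists_between (lt_add_of_pos_right m hη)
  refine ⟨a₀, ha₀, m + b' / b * (m - ‖u‖), ?_, fun a ha => ?_⟩
  · have : b' / b * (m - ‖u‖ - b * α) = b' / b * (m - ‖u‖) - b' * α := by field_simp
    simp only [N] at hlt
    linarith
  · have hle := add_mul_le_norm_add_smul_add_smul hA hb hb' hm ha₀ ha
    rw [← mul_le_mul_iff_right₀ hb]
    calc b * (m + b' / b * (m - ‖u‖)) = (b + b') * m - b' * ‖u‖ := by field_simp; ring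
      _ ≤ b * ‖u + b • a₀ + b' • a‖ := sub_le_iff_le_add'.2 hle

theorem exists_seq_norm_sum_growth {A : ℕ → Set E} (hA : ∀ n, Convex ℝ (A n))
    (hne : ∀ n, (A n).Nonempty) (hanti : Antitone A) {b : ℕ → ℝ} (hb : ∀ n, 0 < b n) {α' : ℝ}
    (hα : α < α') (hα' : ∀ a ∈ A 0, α' ≤ ‖a‖) :
    ∃ a : ℕ → E, (∀ n, a n ∈ A n) ∧ ∀ n, b n * α + ‖∑ j ∈ Finset.range n, b j • a j‖ ≤
      ‖∑ j ∈ Finset.range (n + 1), b j • a j‖ := by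
  have exists_next (n : ℕ) (u : {u // HasUniformGrowth (A n) u (b n) α}) :
      ∃ a ∈ A n, HasUniformGrowth (A (n + 1)) (u.1 + b n • a) (b (n + 1)) α := by
    obtain ⟨a, ha, h⟩ := u.2.exists_add_smul (hA n) (hne n) (hb n) (hb (n + 1))
    exact ⟨a, ha, h.anti (hanti n.le_succ)⟩
  choose next hmem hnext using exists_next
  let v : ∀ n, {u // HasUniformGrowth (A n) u (b n) α} := fun n =>
    Nat.rec ⟨0, hasUniformGrowth_zero (hb 0) hα hα'⟩ (fun n u => ⟨_, hnext n u⟩) n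
  have hv (n : ℕ) : (v n).1 = ∑ j ∈ Finset.range n, b j • next j (v j) := by
    induction n with
    | zero => rfl
    | succ n ih => rw [Finset.sum_range_succ, ← ih]
  refine ⟨fun n => next n (v n), fun n => hmem n _, fun n => ?_⟩
  rw [Finset.sum_range_succ, ← hv]
  obtain ⟨M, hM, hMA⟩ := (v n).2
  exact hM.le.trans (hMA _ (hmem n _))

end Growth

section GeometricSeries

variable {E : Type*} [NormedAddCommGroup E] [NormedSpace ℝ E] {r C : ℝ} {a : ℕ → E}

theorem norm_pow_smul_le (hr0 : 0 ≤ r) (ha : ∀ n, ‖a n‖ ≤ C) (n : ℕ) :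
    ‖r ^ n • a n‖ ≤ C * r ^ n := by
  rw [norm_smul, Real.norm_of_nonneg (pow_nonneg hr0 n), mul_comm]
  exact mul_le_mul_of_nonneg_right (ha n) (pow_nonneg hr0 n)

theorem summable_pow_smul_of_norm_le [CompleteSpace E] (hr0 : 0 ≤ r) (hr1 : r < 1)
    (ha : ∀ n, ‖a n‖ ≤ C) : Summable fun n => r ^ n • a n :=
  .of_norm_bounded ((summable_geometric_of_lt_one hr0 hr1).mul_left C) (norm_pow_smul_le hr0 ha)

theorem norm_tsum_pow_smul_le (hr0 : 0 ≤ r) (hr1 : r < 1) (ha : ∀ n, ‖a n‖ ≤ C) (n : ℕ) :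
    ‖∑' j, r ^ (j + n) • a (j + n)‖ ≤ C * (r ^ n / (1 - r)) := by
  have hsum : HasSum (fun j => C * r ^ (j + n)) (C * (r ^ n / (1 - r))) := by
    simpa only [pow_add, mul_comm, div_eq_mul_inv] using
      ((hasSum_geometric_of_lt_one hr0 hr1).mul_left (r ^ n)).mul_left C
  exact tsum_of_norm_bounded hsum fun j => norm_pow_smul_le hr0 ha (j + n)

end GeometricSeries

section NonAttaining

theorem norm_sub_smul_eq_of_forall_mem {E : Type*} [NormedAddCommGroup E] [NormedSpace ℝ E]
    {p : Submodule ℝ E} {w w' : E} (h : ∀ g ∈ p, ‖g - w‖ = ‖g - w'‖) {g : E} (hg : g ∈ p)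
    (B : ℝ) : ‖g - B • w‖ = ‖g - B • w'‖ := by
  rcases eq_or_ne B 0 with rfl | hB
  · simp only [zero_smul]
  · have hscale (z : E) : ‖g - B • z‖ = ‖B‖ * ‖B⁻¹ • g - z‖ := by
      rw [← norm_smul, smul_sub, smul_inv_smul₀ hB]
    rw [hscale, hscale, h _ (p.smul_mem _ hg)]

theorem norm_sum_smul_sub_eq_of_forall_mem {E ι : Type*} [NormedAddCommGroup E] [NormedSpace ℝ E]
    {p : Submodule ℝ E} {w w' : E} (h : ∀ g ∈ p, ‖g - w‖ = ‖g - w'‖) {g : ι → E}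
    (hg : ∀ j, g j ∈ p) (s : Finset ι) (b : ι → ℝ) :
    ‖∑ j ∈ s, b j • (g j - w)‖ = ‖∑ j ∈ s, b j • (g j - w')‖ := by
  simp only [smul_sub, Finset.sum_sub_distrib, ← Finset.sum_smul]
  exact norm_sub_smul_eq_of_forall_mem h (p.sum_mem fun j _ => p.smul_mem _ (hg j)) _

theorem exists_pos_lt_one_mul_div_one_sub_lt {C α : ℝ} (hC : 0 ≤ C) (hα : 0 < α) :
    ∃ r, 0 < r ∧ r < 1 ∧ C * (r / (1 - r)) < α := by
  refine ⟨α / (α + (C + 1)), by positivity, (div_lt_one (by positivity)).2 (by linarith), ?_⟩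
  calc C * (α / (α + (C + 1)) / (1 - α / (α + (C + 1)))) = α * (C / (C + 1)) := by
        rw [one_sub_div (by positivity), add_sub_cancel_left,
          div_div_div_cancel_right₀ (by positivity), mul_div_left_comm]
    _ < α := mul_lt_of_lt_one_right hα ((div_lt_one (by positivity)).2 (lt_add_one C))

variable {X : Type*} [NormedAddCommGroup X] [NormedSpace ℝ X]

theorem tsum_pow_smul_apply_lt_norm {h : ℕ → StrongDual ℝ X} {r C α : ℝ} (hr0 : 0 < r)
    (hr1 : r < 1) (hC : ∀ n, ‖h n‖ ≤ C) (hα : C * (r / (1 - r)) < α)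
    (hgrowth : ∀ n, r ^ n * α + ‖∑ j ∈ Finset.range n, r ^ j • h j‖ ≤
      ‖∑ j ∈ Finset.range (n + 1), r ^ j • h j‖)
    (hsmall : ∀ x ε, 0 < ε → ∃ n, h n x < ε) {x : X} (hx : ‖x‖ ≤ 1) :
    (∑' j, r ^ j • h j) x < ‖∑' j, r ^ j • h j‖ := by
  let v : ℕ → StrongDual ℝ X := fun n => ∑ j ∈ Finset.range n, r ^ j • h j
  let tail : ℕ → StrongDual ℝ X := fun n => ∑' j, r ^ (j + n) • h (j + n)
  have hsum : Summable fun j => r ^ j • h j := summable_pow_smul_of_norm_le hr0.le hr1 hC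
  have hα0 : 0 ≤ α := by
    have hC0 : 0 ≤ C := (norm_nonneg _).trans (hC 0)
    exact (mul_nonneg hC0 (div_nonneg hr0.le (sub_nonneg.2 hr1.le))).trans hα.le
  have hmono : Monotone fun n => ‖v n‖ := monotone_nat_of_le_succ fun n =>
    (le_add_of_nonneg_left (by positivity)).trans (hgrowth n)
  obtain ⟨n, hn⟩ := hsmall x _ (sub_pos.2 hα)
  have htail : tail (n + 1) x ≤ r ^ n * (C * (r / (1 - r))) :=
    calc tail (n + 1) x ≤ ‖tail (n + 1)‖ := apply_le_norm_of_norm_le_one _ hx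
      _ ≤ C * (r ^ (n + 1) / (1 - r)) := norm_tsum_pow_smul_le hr0.le hr1 hC (n + 1)
      _ = r ^ n * (C * (r / (1 - r))) := by ring
  calc (∑' j, r ^ j • h j) x = (v (n + 1) + tail (n + 1)) x := by
        rw [← hsum.sum_add_tsum_nat_add (n + 1)]
    _ = v n x + r ^ n * h n x + tail (n + 1) x := by
        simp only [v, Finset.sum_range_succ, add_apply, smul_apply, smul_eq_mul]
    _ < ‖v n‖ + r ^ n * (α - C * (r / (1 - r))) + r ^ n * (C * (r / (1 - r))) := by
        exact add_lt_add_of_lt_of_le (add_lt_add_of_le_of_lt (apply_le_norm_of_norm_le_one _ hx)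
          (mul_lt_mul_of_pos_left hn (pow_pos hr0 n))) htail
    _ = r ^ n * α + ‖v n‖ := by ring
    _ ≤ ‖v (n + 1)‖ := hgrowth n
    _ ≤ ‖∑' j, r ^ j • h j‖ := hmono.ge_of_tendsto hsum.hasSum.tendsto_sum_nat.norm (n + 1)

variable {V : Filter (StrongDual ℝ X)} [V.NeBot] [V.IsCountablyGenerated]
  {S : Set (StrongDual ℝ X)} {R δ : ℝ}

theorem exists_seq_norm_sum_growth_of_filter (hSV : S ∈ V) (hS : S ⊆ closedBall 0 R)
    (hV : ∀ g ∈ Submodule.span ℝ S, ∀ w w', IsBetweenLimits V w → IsBetweenLimits V w' →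
      ‖g - w‖ = ‖g - w'‖)
    (hdist : ∀ g ∈ convexHull ℝ S, ∀ w, IsBetweenLimits V w → δ ≤ ‖g - w‖)
    {b : ℕ → ℝ} (hb : ∀ n, 0 < b n) {α : ℝ} (hα : α < δ) :
    ∃ (g : ℕ → StrongDual ℝ X) (w : StrongDual ℝ X), (∀ n, ‖g n‖ ≤ R) ∧ ‖w‖ ≤ R ∧
      IsBetweenLimits (map g atTop) w ∧
      ∀ n, b n * α + ‖∑ j ∈ Finset.range n, b j • (g j - w)‖ ≤
        ‖∑ j ∈ Finset.range (n + 1), b j • (g j - w)‖ := by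
  obtain ⟨w, -, hw⟩ := exists_norm_le_isBetweenLimits (mem_of_superset hSV hS)
  obtain ⟨U, hUS, hU⟩ := (V.basis_sets.restrict_subset hSV).exists_antitone_subbasis
  have hKS (n : ℕ) : convexHull ℝ (U n) ⊆ convexHull ℝ S := convexHull_mono (hUS n).2
  obtain ⟨a, ha, hgrowth⟩ := exists_seq_norm_sum_growth
    (A := fun n => (· + w) ⁻¹' convexHull ℝ (U n))
    (fun n => (convex_convexHull ℝ _).translate_preimage_left w)
    (fun n => (Filter.nonempty_of_mem (hU.mem n)).convexHull.preimage (add_right_surjective w))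
    (fun m n hmn => preimage_mono (convexHull_mono (hU.antitone hmn)))
    hb hα (fun a ha => by simpa using hdist _ (hKS 0 ha) w hw)
  let g : ℕ → StrongDual ℝ X := fun n => a n + w
  have hgK (n : ℕ) : g n ∈ convexHull ℝ (U n) := ha n
  have hgR (n : ℕ) : g n ∈ closedBall 0 R :=
    convexHull_min hS (convex_closedBall _ _) (hKS n (hgK n))
  have hgspan (n : ℕ) : g n ∈ Submodule.span ℝ S := 
    convexHull_min Submodule.subset_span (Submodule.convex _) (hKS n (hgK n))
  obtain ⟨w', hw'R, hw'⟩ := exists_norm_le_isBetweenLimits (V := map g atTop)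
    (mem_map.2 (univ_mem' hgR))
  refine ⟨g, w', fun n => by simpa using hgR n, hw'R, hw', fun n => ?_⟩
  have hww' (g) (hg : g ∈ Submodule.span ℝ S) : ‖g - w‖ = ‖g - w'‖ :=
    hV g hg w w' hw (.of_mem_convexHull hU hgK hw')
  simpa only [← norm_sum_smul_sub_eq_of_forall_mem hww' hgspan, g, add_sub_cancel_right]
    using hgrowth n

theorem exists_forall_apply_lt_norm_of_filter (hSV : S ∈ V) (hS : S ⊆ closedBall 0 R)
    (hV : ∀ g ∈ Submodule.span ℝ S, ∀ w w', IsBetweenLimits V w → IsBetweenLimits V w' →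
      ‖g - w‖ = ‖g - w'‖)
    (hδ : 0 < δ) (hdist : ∀ g ∈ convexHull ℝ S, ∀ w, IsBetweenLimits V w → δ ≤ ‖g - w‖) :
    ∃ F : StrongDual ℝ X, ∀ x, ‖x‖ ≤ 1 → F x < ‖F‖ := by
  obtain ⟨f, hf⟩ := Filter.nonempty_of_mem hSV
  have hR : 0 ≤ R := nonempty_closedBall.1 ⟨f, hS hf⟩
  obtain ⟨r, hr0, hr1, hr⟩ :=
    exists_pos_lt_one_mul_div_one_sub_lt (add_nonneg hR hR) (half_pos hδ)
  obtain ⟨g, w, hg, hw, hgw, hgrowth⟩ := exists_seq_norm_sum_growth_of_filter hSV hS hV hdist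
    (fun n => pow_pos hr0 n) (half_lt_self hδ)
  refine ⟨∑' j, r ^ j • (g j - w), fun x hx => tsum_pow_smul_apply_lt_norm hr0 hr1
    (fun n => norm_sub_le_of_le (hg n) hw) hr hgrowth (fun x ε hε => ?_) hx⟩
  by_contra! hge
  have : w x + ε ≤ w x :=
    hgw x _ (eventually_map.2 (.of_forall fun n => le_sub_iff_add_le'.1 (hge n)))
  exact (lt_add_of_pos_right _ hε).not_ge this

theorem sub_le_norm_sub_of_mem_convexHull {f : ℕ → StrongDual ℝ X} {x : ℕ → X} {a b : ℝ}
    (hx : ∀ n, ‖x n‖ ≤ 1) (hle : ∀ m n, m < n → f n (x m) ≤ a)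
    (hge : ∀ m n, m < n → b ≤ f m (x n)) {g w : StrongDual ℝ X} (hg : g ∈ convexHull ℝ (range f))
    (hw : IsBetweenLimits (map f atTop) w) : b - a ≤ ‖g - w‖ := by
  have hconv : Convex ℝ {g : StrongDual ℝ X | ∀ᶠ m in atTop, b ≤ g (x m)} := by
    intro g₁ h₁ g₂ h₂ s t hs ht hst
    filter_upwards [h₁, h₂] with m hm₁ hm₂
    exact convex_Ici b hm₁ hm₂ hs ht hst
  have hrange : range f ⊆ {g | ∀ᶠ m in atTop, b ≤ g (x m)} :=
    range_subset_iff.2 fun i => (eventually_gt_atTop i).mono fun m => hge i m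
  obtain ⟨m, hgm⟩ := (convexHull_min hrange hconv hg).exists
  have hwm : w (x m) ≤ a := hw.le_of_eventually_le
    (eventually_map.2 ((eventually_gt_atTop m).mono fun n => hle m n))
  calc b - a ≤ (g - w) (x m) := sub_le_sub hgm hwm
    _ ≤ ‖g - w‖ := apply_le_norm_of_norm_le_one _ (hx m)

end NonAttaining

theorem james_and_nonreflexive_grothendieck_general (X : Type*)
    [NormedAddCommGroup X] [NormedSpace ℝ X] [CompleteSpace X]
    (h : ¬ Function.Surjective (NormedSpace.inclusionInDoubleDual ℝ X)) :
    ∃ f : X →L[ℝ] ℝ, ∀ x : X, ‖x‖ ≤ 1 → f x < ‖f‖ := by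
  obtain ⟨δ, hδ, f, x, hf, hx, hsmall, hlarge⟩ :=
    exists_seq_triangular_of_not_surjective_inclusionInDoubleDual h
  obtain ⟨V, hVf, _, _, hV⟩ := exists_filter_le_forall_norm_sub_eq (map f atTop)
    (S := Submodule.span ℝ (range f)) (countable_range f).isSeparable.span
  refine exists_forall_apply_lt_norm_of_filter (hVf range_mem_map)
    (range_subset_iff.2 fun n => by simpa using hf n) hV hδ fun g hg w hw => ?_
  calc δ = 2 * δ - δ := by ring
    _ ≤ ‖g - w‖ := sub_le_norm_sub_of_mem_convexHull hx (fun m n hmn => (hsmall m n hmn).le)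
      (fun m n hmn => (hlarge m n hmn).le) hg (hw.mono hVf)

end James

/-- James' theorem: if every functional on `X` attains its norm then `X` is reflexive;
consequently, on a non-reflexive Grothendieck space some functional does not attain
its norm. -/
theorem james_and_nonreflexive_grothendieck (X : Type*)
    [NormedAddCommGroup X] [NormedSpace ℝ X] [CompleteSpace X] :
    ((∀ f : X →L[ℝ] ℝ, ∃ x : X, ‖x‖ = 1 ∧ f x = ‖f‖) →
      Function.Surjective (NormedSpace.inclusionInDoubleDual ℝ X)) ∧
    (IsGrothendieck X →
      ¬ Function.Surjective (NormedSpace.inclusionInDoubleDual ℝ X) →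
      ∃ f : X →L[ℝ] ℝ, ∀ x : X, ‖x‖ = 1 → f x ≠ ‖f‖) := by
  refine ⟨fun h => by_contra fun hns => ?_, fun _ hns => ?_⟩ <;>
    obtain ⟨f, hf⟩ := james_and_nonreflexive_grothendieck_general X hns
  · obtain ⟨x, hx, hfx⟩ := h f
    exact (hf x hx.le).ne hfx
  · exact ⟨f, fun x hx => (hf x hx.le).ne⟩
end
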